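/- Let m ≥ 1, n ≥ 1, D ≥ 1 be integers. For every positive integer N there exists a constant C depending only on m, n, D, N such that the following holds. Let S ⊆ ℝ^n be a finite set with |S| ≤ N and diameter at most 1, and for each x ∈ S let G(x) ⊆ 𝒫⃗ be a nonempty convex set. Then there exists S′ ⊆ S with |S′| ≤ 2^(D·binom(n+m−1, n)) such that ‖(G(x))_{x∈S}‖_{Ẇ^m(S)} ≤ C·‖(G(x))_{x∈S′}‖_{Ẇ^m(S′)}, where for any finite T ⊆ ℝ^n, ‖(G(x))_{x∈T}‖_{Ẇ^m(T)} := inf { ‖(P⃗^x)_{x∈T}‖_{Ẇ^m(T)} : P⃗^x ∈ G(x) for all x ∈ T }. -/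

import Mathlib

open scoped BigOperators Classical

noncomputable section

/-- `En n` is Euclidean space `ℝ^n`. -/
abbrev En (n : ℕ) : Type := EuclideanSpace ℝ (Fin n)

/-- First-order partial derivative `∂_i f` in the `i`-th coordinate direction. -/
noncomputable def pd1 {n : ℕ} (i : Fin n) (f : En n → ℝ) : En n → ℝ :=
  fun x => fderiv ℝ f x (EuclideanSpace.single i 1)

/-- Higher-order partial derivative `∂^α f` for a multi-index `α`. -/
noncomputable def pdalpha {n : ℕ} (α : Fin n → ℕ) (f : En n → ℝ) : En n → ℝ :=
  (List.finRange n).foldr (fun i g => (pd1 i)^[α i] g) f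

/-- First-order partial derivative within a set `s`. -/
noncomputable def pd1W {n : ℕ} (s : Set (En n)) (i : Fin n) (f : En n → ℝ) : En n → ℝ :=
  fun x => fderivWithin ℝ f s x (EuclideanSpace.single i 1)

/-- Higher-order partial derivative `∂^α f` within a set `s`. -/
noncomputable def pdalphaW {n : ℕ} (s : Set (En n)) (α : Fin n → ℕ) (f : En n → ℝ) : En n → ℝ :=
  (List.finRange n).foldr (fun i g => (pd1W s i)^[α i] g) f

/-- `∂^α` of a multivariate polynomial (formal derivative). -/
noncomputable def polyPD {n : ℕ} (α : Fin n → ℕ) (p : MvPolynomial (Fin n) ℝ) :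
    MvPolynomial (Fin n) ℝ :=
  (List.finRange n).foldr (fun i q => (fun r => MvPolynomial.pderiv i r)^[α i] q) p

/-- The value `∂^α p (x)` of the `α`-th derivative of a polynomial at `x`. -/
noncomputable def polyPDval {n : ℕ} (α : Fin n → ℕ) (p : MvPolynomial (Fin n) ℝ) (x : En n) : ℝ :=
  MvPolynomial.eval (fun i => x i) (polyPD α p)

/-- The `(m-1)`-jet (Taylor polynomial of degree `≤ m-1`) of `f` at `x`. -/
noncomputable def jetScalar (m : ℕ) {n : ℕ} (f : En n → ℝ) (x : En n) :
    MvPolynomial (Fin n) ℝ :=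
  ∑ α ∈ (Finset.univ : Finset (Fin n → Fin m)).filter (fun α => (∑ i, (α i : ℕ)) ≤ m - 1),
    MvPolynomial.C (pdalpha (fun i => (α i : ℕ)) f x / ((∏ i, Nat.factorial (α i : ℕ) : ℕ) : ℝ))
      * ∏ i, (MvPolynomial.X i - MvPolynomial.C (x i)) ^ ((α i : ℕ))

/-- The `(m-1)`-jet of `f` at `x`, with derivatives taken within a set `s`. -/
noncomputable def jetScalarW (m : ℕ) {n : ℕ} (s : Set (En n)) (f : En n → ℝ) (x : En n) :
    MvPolynomial (Fin n) ℝ :=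
  ∑ α ∈ (Finset.univ : Finset (Fin n → Fin m)).filter (fun α => (∑ i, (α i : ℕ)) ≤ m - 1),
    MvPolynomial.C (pdalphaW s (fun i => (α i : ℕ)) f x / ((∏ i, Nat.factorial (α i : ℕ) : ℕ) : ℝ))
      * ∏ i, (MvPolynomial.X i - MvPolynomial.C (x i)) ^ ((α i : ℕ))

/-- The vector-valued `(m-1)`-jet `J_x F ∈ 𝒫⃗` of `F : ℝ^n → ℝ^D` at `x`. -/
noncomputable def jetD (m : ℕ) {n D : ℕ} (F : En n → Fin D → ℝ) (x : En n) :
    Fin D → MvPolynomial (Fin n) ℝ :=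
  fun j => jetScalar m (fun y => F y j) x

/-- The vector-valued `(m-1)`-jet of `F` at `x`, derivatives within `s`. -/
noncomputable def jetDW (m : ℕ) {n D : ℕ} (s : Set (En n)) (F : En n → Fin D → ℝ) (x : En n) :
    Fin D → MvPolynomial (Fin n) ℝ :=
  fun j => jetScalarW m s (fun y => F y j) x

/-- Truncation of a polynomial to total degree `≤ k`. -/
noncomputable def truncDeg {n : ℕ} (k : ℕ) (p : MvPolynomial (Fin n) ℝ) :
    MvPolynomial (Fin n) ℝ :=
  ∑ s ∈ p.support.filter (fun s => (s.sum fun _ e => e) ≤ k),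
    MvPolynomial.monomial s (MvPolynomial.coeff s p)

/-- The degree-`k` Taylor truncation of a polynomial at `x` (the jet `J_x p` of order `k`). -/
noncomputable def taylorTrunc {n : ℕ} (k : ℕ) (x : En n) (p : MvPolynomial (Fin n) ℝ) :
    MvPolynomial (Fin n) ℝ :=
  MvPolynomial.bind₁ (fun i => MvPolynomial.X i - MvPolynomial.C (x i))
    (truncDeg k (MvPolynomial.bind₁ (fun i => MvPolynomial.X i + MvPolynomial.C (x i)) p))

/-- The ring multiplication `p ⊙_x q := J_x(pq)` on degree-`k` jets at `x`. -/
noncomputable def odot {n : ℕ} (k : ℕ) (x : En n) (p q : MvPolynomial (Fin n) ℝ) :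
    MvPolynomial (Fin n) ℝ :=
  taylorTrunc k x (p * q)

/-- `(Γ x M)_{x ∈ E, M > 0}` is a shape field with jets of degree `≤ k` and `d` components:
each `Γ x M` is a convex set of `d`-tuples of polynomials of degree `≤ k`, monotone in `M`. -/
def IsShapeField {N : ℕ} (k d : ℕ) (E : Finset (En N))
    (Γ : En N → ℝ → Set (Fin d → MvPolynomial (Fin N) ℝ)) : Prop :=
  (∀ x ∈ E, ∀ M : ℝ, 0 < M → Convex ℝ (Γ x M)) ∧
  (∀ x ∈ E, ∀ M : ℝ, 0 < M → ∀ P ∈ Γ x M, ∀ j, (P j).totalDegree ≤ k) ∧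
  (∀ x ∈ E, ∀ M' M : ℝ, 0 < M' → M' ≤ M → Γ x M' ⊆ Γ x M)

/-- `(C_w, δmax)`-convexity of a shape field with jets of degree `≤ k`. -/
def SFConvex {N : ℕ} (k d : ℕ) (E : Finset (En N))
    (Γ : En N → ℝ → Set (Fin d → MvPolynomial (Fin N) ℝ)) (Cw δmax : ℝ) : Prop :=
  ∀ δ : ℝ, 0 < δ → δ ≤ δmax → ∀ x ∈ E, ∀ M : ℝ, 0 < M →
    ∀ P₁ P₂ : Fin d → MvPolynomial (Fin N) ℝ, P₁ ∈ Γ x M → P₂ ∈ Γ x M →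
    ∀ Q₁ Q₂ : MvPolynomial (Fin N) ℝ, Q₁.totalDegree ≤ k → Q₂.totalDegree ≤ k →
    (∀ α : Fin N → ℕ, (∑ i, α i) ≤ k → ∀ j,
      |polyPDval α (P₁ j - P₂ j) x| ≤ M * δ ^ (k + 1 - ∑ i, α i)) →
    (∀ α : Fin N → ℕ, (∑ i, α i) ≤ k →
      |polyPDval α Q₁ x| ≤ δ ^ (-((∑ i, α i : ℕ) : ℤ)) ∧
      |polyPDval α Q₂ x| ≤ δ ^ (-((∑ i, α i : ℕ) : ℤ))) →
    odot k x Q₁ Q₁ + odot k x Q₂ Q₂ = 1 →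
    (fun j => odot k x (odot k x Q₁ Q₁) (P₁ j) + odot k x (odot k x Q₂ Q₂) (P₂ j))
      ∈ Γ x (Cw * M)

/-- `‖(P^x)_{x ∈ S}‖_{Ẇ^m(S)} ≤ M` : the homogeneous Whitney seminorm bound. -/
def WSemiLE (m : ℕ) {N d : ℕ} (S : Finset (En N))
    (P : En N → Fin d → MvPolynomial (Fin N) ℝ) (M : ℝ) : Prop :=
  ∀ x ∈ S, ∀ y ∈ S, x ≠ y → ∀ α : Fin N → ℕ, (∑ i, α i) ≤ m - 1 → ∀ j,
    |polyPDval α (P x j - P y j) x| ≤ M * dist x y ^ (m - ∑ i, α i)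

/-- The homogeneous Whitney seminorm `‖(P^x)_{x ∈ S}‖_{Ẇ^m(S)}`. -/
noncomputable def WNormHomog (m : ℕ) {N d : ℕ} (S : Finset (En N))
    (P : En N → Fin d → MvPolynomial (Fin N) ℝ) : ℝ :=
  sSup {r : ℝ | ∃ x ∈ S, ∃ y ∈ S, x ≠ y ∧ ∃ α : Fin N → ℕ, (∑ i, α i) ≤ m - 1 ∧ ∃ j : Fin d,
    r = |polyPDval α (P x j - P y j) x| / dist x y ^ (m - ∑ i, α i)}

/-- The lower-order part of the Whitney norm. -/
noncomputable def WNormLow (m : ℕ) {N d : ℕ} (S : Finset (En N))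
    (P : En N → Fin d → MvPolynomial (Fin N) ℝ) : ℝ :=
  sSup {r : ℝ | ∃ x ∈ S, ∃ α : Fin N → ℕ, (∑ i, α i) ≤ m - 1 ∧ ∃ j : Fin d,
    r = |polyPDval α (P x j) x|}

/-- The Whitney norm `‖(P^x)_{x ∈ S}‖_{W^m(S)}`. -/
noncomputable def WNormFull (m : ℕ) {N d : ℕ} (S : Finset (En N))
    (P : En N → Fin d → MvPolynomial (Fin N) ℝ) : ℝ :=
  WNormLow m S P + WNormHomog m S P

/-- `‖F‖_{C^m} ≤ M`: all partials of order `≤ m` of all components bounded by `M`. -/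
def CmLE (m : ℕ) {n D : ℕ} (F : En n → Fin D → ℝ) (M : ℝ) : Prop :=
  ∀ α : Fin n → ℕ, (∑ i, α i) ≤ m → ∀ x : En n, ∀ j, |pdalpha α (fun y => F y j) x| ≤ M

/-- `‖F‖_{Ċ^m} ≤ M`: all partials of order `= m` of all components bounded by `M`. -/
def CmHomogLE (m : ℕ) {n D : ℕ} (F : En n → Fin D → ℝ) (M : ℝ) : Prop :=
  ∀ α : Fin n → ℕ, (∑ i, α i) = m → ∀ x : En n, ∀ j, |pdalpha α (fun y => F y j) x| ≤ M

/-- `‖F‖_{C^{m-1,1}} ≤ M`. -/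
def Cm11LE (m : ℕ) {n D : ℕ} (F : En n → Fin D → ℝ) (M : ℝ) : Prop :=
  (∀ α : Fin n → ℕ, (∑ i, α i) ≤ m - 1 → ∀ x : En n, ∀ j,
    |pdalpha α (fun y => F y j) x| ≤ M) ∧
  (∀ α : Fin n → ℕ, (∑ i, α i) = m - 1 → ∀ j, ∀ x y : En n,
    |pdalpha α (fun z => F z j) x - pdalpha α (fun z => F z j) y| ≤ M * dist x y)

/-- A closed cube in `ℝ^n` with lower corner `a` and side length `δ`. -/
def cube {n : ℕ} (a : En n) (δ : ℝ) : Set (En n) := {y | ∀ i, a i ≤ y i ∧ y i ≤ a i + δ}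

/-- The embedding `ℝ^n → ℝ^{n+D}`, `x ↦ (x, 0)`. -/
noncomputable def embed (n D : ℕ) (x : En n) : En (n + D) :=
  (EuclideanSpace.equiv (Fin (n + D)) ℝ).symm
    (Fin.append (fun i : Fin n => x i) (fun _ : Fin D => (0 : ℝ)))

/-- The projection `ℝ^{n+D} → ℝ^n`, `(x, ξ) ↦ x`. -/
noncomputable def projn (n D : ℕ) (z : En (n + D)) : En n :=
  (EuclideanSpace.equiv (Fin n) ℝ).symm (fun i => z (Fin.castAdd D i))

/-- Restriction of a polynomial on `ℝ^{n+D}` to `ℝ^n × {0}`, as a polynomial on `ℝ^n`. -/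
noncomputable def restrict0 (n D : ℕ) (p : MvPolynomial (Fin (n + D)) ℝ) :
    MvPolynomial (Fin n) ℝ :=
  MvPolynomial.aeval
    (Fin.append (fun i : Fin n => (MvPolynomial.X i : MvPolynomial (Fin n) ℝ))
      (fun _ : Fin D => 0)) p


/-- The selection seminorm `‖(G(x))_{x∈T}‖_{Ẇ^m(T)}`: the infimum of homogeneous Whitney
seminorms of selections of the family `(G x)_{x ∈ T}`. -/
noncomputable def selNormHomog (m : ℕ) {N d : ℕ} (T : Finset (En N))
    (G : En N → Set (Fin d → MvPolynomial (Fin N) ℝ)) : ℝ :=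
  sInf {r : ℝ | ∃ P : En N → Fin d → MvPolynomial (Fin N) ℝ,
    (∀ x ∈ T, P x ∈ G x) ∧ r = WNormHomog m T P}

set_option linter.all false

section AlgPart

variable {K V X : Type*} [Field K] (O : ValuationSubring K) [AddCommGroup V] [Module K V]
  [Fintype X]

/-- Fields on `Q` that are bounded by `B` and pairwise bounded by `β`. -/
def lamSet (β : X → X → Submodule O V) (Q : Finset X) (B : Submodule O V) : Set (X → V) :=
  {P | (∀ i ∈ Q, P i ∈ B) ∧ ∀ i ∈ Q, ∀ j ∈ Q, i ≠ j → P i - P j ∈ β i j}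

/-- The weights that keep the functional bounded. -/
def modW (β : X → X → Submodule O V) (ξ : X → (V →ₗ[K] K)) (Q : Finset X)
    (B : Submodule O V) : Submodule O (X → O) where
  carrier := {c | (∀ i, i ∉ Q → c i = 0) ∧
    ∀ P ∈ lamSet O β Q B, (∑ i, (c i : K) * ξ i (P i)) ∈ O}
  add_mem' := by
    rintro a b ⟨ha, ha'⟩ ⟨hb, hb'⟩
    refine ⟨fun i hi => by simp [ha i hi, hb i hi], fun P hP => ?_⟩
    have := O.add_mem _ _ (ha' P hP) (hb' P hP)
    rw [← Finset.sum_add_distrib] at this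
    convert this using 2
    simp [add_mul]
  zero_mem' := ⟨by simp, by intro P hP; simpa using O.zero_mem⟩
  smul_mem' := by
    rintro a b ⟨hb, hb'⟩
    refine ⟨fun i hi => by simp [hb i hi], fun P hP => ?_⟩
    have := O.mul_mem _ _ a.2 (hb' P hP)
    rw [Finset.mul_sum] at this
    convert this using 2
    simp [mul_assoc]

/-- The sum functional. -/
def sigW (ξ : X → (V →ₗ[K] K)) (c : X → O) : (V →ₗ[K] K) := ∑ i, (c i : K) • ξ i

/-- The dual lattice. -/
def dualW (B : Submodule O V) : Submodule O (V →ₗ[K] K) where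
  carrier := {w | ∀ p ∈ B, w p ∈ O}
  add_mem' := by
    intro a b ha hb p hp
    exact O.add_mem _ _ (ha p hp) (hb p hp)
  zero_mem' := by intro p hp; simpa using O.zero_mem
  smul_mem' := by
    intro a b hb p hp
    exact O.mul_mem _ _ a.2 (hb p hp)

variable {O}

lemma mem_dualW {B : Submodule O V} {w : (V →ₗ[K] K)} :
    w ∈ dualW O B ↔ ∀ p ∈ B, w p ∈ O := Iff.rfl

lemma dualW_anti {B B' : Submodule O V} (h : B ≤ B') : dualW O B' ≤ dualW O B :=
  fun _ hw p hp => hw p (h hp)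

lemma sigW_add (ξ : X → (V →ₗ[K] K)) (a b : X → O) :
    sigW O ξ (a + b) = sigW O ξ a + sigW O ξ b := by
  simp [sigW, add_smul, Finset.sum_add_distrib]

lemma sigW_smul (ξ : X → (V →ₗ[K] K)) (a : O) (b : X → O) :
    sigW O ξ (a • b) = (a : K) • sigW O ξ b := by
  simp [sigW, mul_smul, Finset.smul_sum]

lemma sigW_zero (ξ : X → (V →ₗ[K] K)) : sigW O ξ 0 = 0 := by
  simp [sigW]

lemma sigW_sum {J : Type*} (s : Finset J) (ξ : X → (V →ₗ[K] K)) (a : J → X → O) :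
    sigW O ξ (∑ j ∈ s, a j) = ∑ j ∈ s, sigW O ξ (a j) := by
  induction s using Finset.induction_on with
  | empty => simp [sigW_zero]
  | insert j s hj ih => rw [Finset.sum_insert hj, Finset.sum_insert hj, sigW_add, ih]

lemma sigW_apply (ξ : X → (V →ₗ[K] K)) (c : X → O) (p : V) :
    sigW O ξ c p = ∑ i, (c i : K) * ξ i p := by
  simp [sigW]

lemma modW_sig {β : X → X → Submodule O V} {ξ : X → (V →ₗ[K] K)} {Q : Finset X}
    {B : Submodule O V} {c : X → O} (hc : c ∈ modW O β ξ Q B) : sigW O ξ c ∈ dualW O B := by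
  intro p hp
  rw [sigW_apply]
  exact hc.2 (fun _ => p) ⟨fun _ _ => hp, fun _ _ _ _ _ => by simp⟩

/-- Restriction of weights to a subset. -/
def restrW (Q : Finset X) (c : X → O) : X → O := fun i => if i ∈ Q then c i else 0

lemma modW_node_mem {β : X → X → Submodule O V} {ξ : X → (V →ₗ[K] K)} {Q₁ Q₂ : Finset X}
    {b B : Submodule O V} 
    (hin : ∀ i ∈ Q₁ ∪ Q₂, ∀ j ∈ Q₁ ∪ Q₂, i ≠ j → β i j ≤ b)
    (hne : (Q₁ ∪ Q₂).Nonempty) {c₁ c₂ : X → O}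
    (h₁ : c₁ ∈ modW O β ξ Q₁ b) (h₂ : c₂ ∈ modW O β ξ Q₂ b)
    (hs : sigW O ξ (c₁ + c₂) ∈ dualW O B) : c₁ + c₂ ∈ modW O β ξ (Q₁ ∪ Q₂) B := by
  refine ⟨fun i hi => ?_, fun P hP => ?_⟩
  · rw [Finset.mem_union, not_or] at hi
    simp [h₁.1 i hi.1, h₂.1 i hi.2]
  · obtain ⟨z, hz⟩ := hne
    have key : ∀ i ∈ Q₁ ∪ Q₂, P i - P z ∈ b := by
      intro i hi
      by_cases h : i = z
      · subst h; simp
      · exact hin i hi z hz h (hP.2 i hi z hz h)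
    have e₁ := h₁.2 (fun i => P i - P z) ⟨fun i hi => key i (Finset.mem_union_left _ hi),
      fun i hi j hj hij => by
        simpa using hP.2 i (Finset.mem_union_left _ hi) j (Finset.mem_union_left _ hj) hij⟩
    have e₂ := h₂.2 (fun i => P i - P z) ⟨fun i hi => key i (Finset.mem_union_right _ hi),
      fun i hi j hj hij => by
        simpa using hP.2 i (Finset.mem_union_right _ hi) j (Finset.mem_union_right _ hj) hij⟩
    have e₃ := hs (P z) (hP.1 z hz)
    rw [sigW_apply] at e₃
    have := O.add_mem _ _ (O.add_mem _ _ e₁ e₂) e₃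
    rw [← Finset.sum_add_distrib, ← Finset.sum_add_distrib] at this
    convert this using 2
    simp
    ring

lemma modW_node_restr {β : X → X → Submodule O V} {ξ : X → (V →ₗ[K] K)} {Q Q₁ : Finset X}
    {b B : Submodule O V} (hbB : b ≤ B) (hsub : Q₁ ⊆ Q)
    (hcr : ∀ i ∈ Q₁, ∀ j ∈ Q \ Q₁, b ≤ β i j ∧ b ≤ β j i) {c : X → O}
    (hc : c ∈ modW O β ξ Q B) : restrW Q₁ c ∈ modW O β ξ Q₁ b := by
  refine ⟨fun i hi => by simp [restrW, hi], fun P hP => ?_⟩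
  have := hc.2 (fun i => if i ∈ Q₁ then P i else 0) ⟨?_, ?_⟩
  · convert this using 2 with i
    by_cases hi : i ∈ Q₁ <;> simp [restrW, hi]
  · intro i hi
    by_cases hi' : i ∈ Q₁
    · simpa [hi'] using hbB (hP.1 i hi')
    · simp [hi']
  · intro i hi j hj hij
    by_cases hi' : i ∈ Q₁ <;> by_cases hj' : j ∈ Q₁
    · simpa [hi', hj'] using hP.2 i hi' j hj' hij
    · simpa [hi', hj'] using (hcr i hi' j (by simp [hj, hj'])).1 (hP.1 i hi')
    · simpa [hi', hj'] using (hcr j hj' i (by simp [hi, hi'])).2 (hP.1 j hj')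
    · simp [hi', hj']

variable (O) in
/-- Reduction of weights to the residue field. -/
def redW (c : X → O) : X → IsLocalRing.ResidueField O := fun i => IsLocalRing.residue O (c i)

lemma redW_add (a b : X → O) : redW O (a + b) = redW O a + redW O b := by
  ext i; simp [redW]

lemma redW_smul (a : O) (b : X → O) :
    redW O (a • b) = IsLocalRing.residue O a • redW O b := by
  ext i; simp [redW]

lemma redW_zero : redW O (0 : X → O) = 0 := by
  ext i; simp [redW]

lemma redW_sum {J : Type*} (s : Finset J) (a : J → X → O) :
    redW O (∑ j ∈ s, a j) = ∑ j ∈ s, redW O (a j) := by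
  induction s using Finset.induction_on with
  | empty => simp [redW_zero]
  | insert j s hj ih => rw [Finset.sum_insert hj, Finset.sum_insert hj, redW_add, ih]

/-- The reduction of a module of weights. -/
def barW (M : Submodule O (X → O)) : Submodule (IsLocalRing.ResidueField O)
    (X → IsLocalRing.ResidueField O) where
  carrier := {r | ∃ c ∈ M, redW O c = r}
  add_mem' := by
    rintro _ _ ⟨a, ha, rfl⟩ ⟨b, hb, rfl⟩
    exact ⟨a + b, M.add_mem ha hb, redW_add a b⟩
  zero_mem' := ⟨0, M.zero_mem, redW_zero⟩
  smul_mem' := by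
    rintro r _ ⟨b, hb, rfl⟩
    obtain ⟨a, rfl⟩ := IsLocalRing.residue_surjective r
    exact ⟨a • b, M.smul_mem a hb, redW_smul a b⟩

/-- Weights of `M` with bounded sum. -/
def cutW (ξ : X → (V →ₗ[K] K)) (M : Submodule O (X → O)) (B : Submodule O V) :
    Submodule O (X → O) where
  carrier := {c | c ∈ M ∧ sigW O ξ c ∈ dualW O B}
  add_mem' := by
    rintro a b ⟨ha, ha'⟩ ⟨hb, hb'⟩
    exact ⟨M.add_mem ha hb, by rw [sigW_add]; exact (dualW O B).add_mem ha' hb'⟩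
  zero_mem' := ⟨M.zero_mem, by rw [sigW_zero]; exact (dualW O B).zero_mem⟩
  smul_mem' := by
    rintro a b ⟨hb, hb'⟩
    exact ⟨M.smul_mem a hb, by rw [sigW_smul]; exact (dualW O B).smul_mem a hb'⟩

lemma exists_max_val {J : Type*} [Fintype J] (a : J → K) (j₁ : J) (h : a j₁ ≠ 0) :
    ∃ j₀, a j₀ ≠ 0 ∧ ∀ j, a j * (a j₀)⁻¹ ∈ O := by
  obtain ⟨j₀, -, h₀⟩ := Finset.exists_max_image Finset.univ (fun j => O.valuation (a j))
    ⟨j₁, Finset.mem_univ _⟩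
  have hne : a j₀ ≠ 0 := by
    intro h0
    have := h₀ j₁ (Finset.mem_univ _)
    simp [h0, h] at this
  refine ⟨j₀, hne, fun j => ?_⟩
  rw [← O.valuation_le_one_iff, map_mul, map_inv₀]
  have := h₀ j (Finset.mem_univ _)
  have hpos : O.valuation (a j₀) ≠ 0 := by simpa using hne
  exact mul_inv_le_one_of_le₀ this zero_le

theorem cutW_step [FiniteDimensional K V] (ξ : X → (V →ₗ[K] K)) (M : Submodule O (X → O))
    {b B : Submodule O V} (hbB : b ≤ B) (hM : ∀ c ∈ M, sigW O ξ c ∈ dualW O b)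
    (W : Submodule K (V →ₗ[K] K))
    (hW : ∀ w ∈ W, w ∈ dualW O b → ∃ t ∈ M, redW O t = 0 ∧ sigW O ξ t = w) :
    ∃ W' : Submodule K (V →ₗ[K] K),
      Module.finrank K W' + Module.finrank (IsLocalRing.ResidueField O) (barW (cutW ξ M B)) =
        Module.finrank K W + Module.finrank (IsLocalRing.ResidueField O) (barW M) ∧
      ∀ w ∈ W', w ∈ dualW O B → ∃ t ∈ cutW ξ M B, redW O t = 0 ∧ sigW O ξ t = w := by
  set k := IsLocalRing.ResidueField O
  have hle : barW (cutW ξ M B) ≤ barW M := by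
    rintro r ⟨c, hc, rfl⟩
    exact ⟨c, hc.1, rfl⟩
  obtain ⟨N', hN'⟩ := Submodule.exists_isCompl (barW (cutW ξ M B))
  set N := N' ⊓ barW M with hN
  have hdisj : N ⊓ barW (cutW ξ M B) = ⊥ := by
    rw [eq_bot_iff]
    intro r hr
    have := hN'.inf_eq_bot
    rw [eq_bot_iff] at this
    exact this ⟨hr.2, hr.1.1⟩
  have hsup : N ⊔ barW (cutW ξ M B) = barW M := by
    rw [hN, sup_comm, ← sup_inf_assoc_of_le N' hle, hN'.sup_eq_top, top_inf_eq]
  have hrank := Submodule.finrank_sup_add_finrank_inf_eq N (barW (cutW ξ M B))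
  rw [hsup, hdisj, finrank_bot, add_zero] at hrank
  set e := Module.finrank k N with he
  let bs : Module.Basis (Fin e) k N := Module.finBasis k N
  have hex : ∀ j, ∃ c ∈ M, redW O c = (bs j : X → k) := fun j => (bs j).2.2
  choose c hcM hcr using hex
  -- the reduction of a combination
  have hred : ∀ a : Fin e → O, redW O (∑ j, a j • c j) =
      ((∑ j, IsLocalRing.residue O (a j) • bs j : N) : X → k) := by
    intro a
    rw [redW_sum]
    push_cast
    refine Finset.sum_congr rfl fun j _ => ?_
    rw [redW_smul, hcr]
  have hsig : ∀ a : Fin e → O, sigW O ξ (∑ j, a j • c j) = ∑ j, (a j : K) • sigW O ξ (c j) := by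
    intro a
    rw [sigW_sum]
    exact Finset.sum_congr rfl fun j _ => sigW_smul _ _ _
  have hmem : ∀ a : Fin e → O, (∑ j, a j • c j) ∈ M :=
    fun a => M.sum_mem fun j _ => M.smul_mem _ (hcM j)
  -- normalised claim
  have claim0 : ∀ a : Fin e → O, ∀ w ∈ W, (∑ j, (a j : K) • sigW O ξ (c j)) + w ∈ dualW O B →
      (∀ j, IsLocalRing.residue O (a j) = 0) ∧ ∃ t ∈ M, redW O t = 0 ∧ sigW O ξ t = w := by
    intro a w hw hv
    have hwb : w ∈ dualW O b := by
      have h1 := dualW_anti hbB hv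
      have h2 := hM _ (hmem a)
      rw [hsig] at h2
      simpa using (dualW O b).sub_mem h1 h2
    obtain ⟨t, ht, htr, hts⟩ := hW w hw hwb
    refine ⟨?_, t, ht, htr, hts⟩
    have hcut : (∑ j, a j • c j) + t ∈ cutW ξ M B := by
      refine ⟨M.add_mem (hmem a) ht, ?_⟩
      rw [sigW_add, hsig, hts]; exact hv
    have hz : (∑ j, IsLocalRing.residue O (a j) • bs j : N) = 0 := by
      have : ((∑ j, IsLocalRing.residue O (a j) • bs j : N) : X → k) ∈
          N ⊓ barW (cutW ξ M B) := by
        refine ⟨Subtype.mem _, _, hcut, ?_⟩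
        rw [redW_add, htr, add_zero, hred]
      rw [hdisj, Submodule.mem_bot] at this
      exact Subtype.ext this
    exact Fintype.linearIndependent_iff.1 bs.linearIndependent _ hz
  have hone : ∀ {a : Fin e → K} (j₀ : Fin e), a j₀ ≠ 0 → ∀ h : a j₀ * (a j₀)⁻¹ ∈ O,
      IsLocalRing.residue O ⟨_, h⟩ = 0 → False := by
    intro a j₀ hj₀ h h0
    have h1 : (⟨_, h⟩ : O) = 1 := Subtype.ext (mul_inv_cancel₀ hj₀)
    rw [h1, map_one] at h0
    exact one_ne_zero h0
  have hscale : ∀ (a : Fin e → K) (w : V →ₗ[K] K) (s : K),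
      s • ((∑ j, a j • sigW O ξ (c j)) + w) = (∑ j, (a j * s) • sigW O ξ (c j)) + s • w := by
    intro a w s
    rw [smul_add, Finset.smul_sum]
    congr 1
    exact Finset.sum_congr rfl fun j _ => by rw [smul_smul, mul_comm]
  have claimA : ∀ a : Fin e → K, ∀ w ∈ W, (∑ j, a j • sigW O ξ (c j)) + w ∈ dualW O B →
      ∀ j, a j ∈ O := by
    intro a w hw hv j
    by_contra hj
    have hj0 : a j ≠ 0 := by rintro h; rw [h] at hj; exact hj O.zero_mem
    obtain ⟨j₀, hj₀, hmax⟩ := exists_max_val (O := O) a j hj0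
    have hinv : (a j₀)⁻¹ ∈ O := by
      rcases O.mem_or_inv_mem (a j₀) with h | h
      · exact absurd (by simpa [hj₀] using O.mul_mem _ _ (hmax j) h) hj
      · exact h
    have := (claim0 (fun i => ⟨_, hmax i⟩) ((a j₀)⁻¹ • w) (W.smul_mem _ hw) ?_).1 j₀
    · exact hone j₀ hj₀ _ this
    · have := (dualW O B).smul_mem ⟨_, hinv⟩ hv
      rw [← hscale] 
      exact this
  let L : (Fin e → K) × W →ₗ[K] (V →ₗ[K] K) :=
    (Fintype.linearCombination K (fun j => sigW O ξ (c j))).coprod W.subtype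
  have hL : ∀ a w, L (a, w) = (∑ j, a j • sigW O ξ (c j)) + w := by
    intro a w
    simp [L, Fintype.linearCombination_apply]
  have hinj : Function.Injective L := by
    rw [injective_iff_map_eq_zero]
    rintro ⟨a, w⟩ h
    rw [hL] at h
    have ha : a = 0 := by
      by_contra hne
      obtain ⟨j, hj⟩ := Function.ne_iff.1 hne
      obtain ⟨j₀, hj₀, hmax⟩ := exists_max_val (O := O) a j hj
      have := (claim0 (fun i => ⟨_, hmax i⟩) ((a j₀)⁻¹ • (w : V →ₗ[K] K))
        (W.smul_mem _ w.2) ?_).1 j₀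
      · exact hone j₀ hj₀ _ this
      · have h2 := hscale a w (a j₀)⁻¹
        rw [h, smul_zero] at h2
        have h3 := (dualW O B).zero_mem
        rw [h2] at h3
        exact h3
    subst ha
    simpa using h
  refine ⟨LinearMap.range L, ?_, ?_⟩
  · haveI : Module.Free K W := Module.Free.of_divisionRing K W
    rw [LinearMap.finrank_range_of_inj hinj, Module.finrank_prod, hrank]
    simp
    ring
  · rintro _ ⟨⟨a, w⟩, rfl⟩ hv
    rw [hL] at hv ⊢
    have hO := claimA a w w.2 hv
    obtain ⟨hres, t, ht, htr, hts⟩ := claim0 (fun j => ⟨a j, hO j⟩) w w.2 hv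
    refine ⟨(∑ j, (⟨a j, hO j⟩ : O) • c j) + t, ⟨M.add_mem (hmem _) ht, ?_⟩, ?_, ?_⟩
    · rw [sigW_add, hsig, hts]; exact hv
    · rw [redW_add, htr, hred]; simp [hres]
    · rw [sigW_add, hsig, hts]

lemma barW_sup (M₁ M₂ : Submodule O (X → O)) : barW (M₁ ⊔ M₂) = barW M₁ ⊔ barW M₂ := by
  apply le_antisymm
  · rintro _ ⟨c, hc, rfl⟩
    obtain ⟨a, ha, b, hb, rfl⟩ := Submodule.mem_sup.1 hc
    rw [redW_add]
    exact Submodule.add_mem_sup ⟨a, ha, rfl⟩ ⟨b, hb, rfl⟩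
  · refine sup_le ?_ ?_
    · rintro _ ⟨c, hc, rfl⟩
      exact ⟨c, Submodule.mem_sup_left hc, rfl⟩
    · rintro _ ⟨c, hc, rfl⟩
      exact ⟨c, Submodule.mem_sup_right hc, rfl⟩

lemma arithW {p₁ p₂ r₁ r₂ l₁ l₂ l r l' : ℕ} (h₁ : p₁ ≤ r₁ * 2 ^ l₁) (h₂ : p₂ ≤ r₂ * 2 ^ l₂)
    (hl₁ : l₁ ≤ l') (hl₂ : l₂ ≤ l') (hr : 1 ≤ r) (hrr : r ≤ r₁ + r₂)
    (he : l + r = l' + (r₁ + r₂)) : p₁ + p₂ ≤ r * 2 ^ l := by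
  obtain ⟨e, hee⟩ := Nat.exists_eq_add_of_le hrr
  have hle : l = l' + e := by omega
  have a₁ : r₁ * 2 ^ l₁ ≤ r₁ * 2 ^ l' := Nat.mul_le_mul_left _ (Nat.pow_le_pow_right (by norm_num) hl₁)
  have a₂ : r₂ * 2 ^ l₂ ≤ r₂ * 2 ^ l' := Nat.mul_le_mul_left _ (Nat.pow_le_pow_right (by norm_num) hl₂)
  have h2 : e + 1 ≤ 2 ^ e := Nat.lt_two_pow_self
  calc p₁ + p₂ ≤ (r₁ + r₂) * 2 ^ l' := by rw [add_mul]; omega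
    _ = (r + e) * 2 ^ l' := by rw [hee]
    _ ≤ (r * 2 ^ e) * 2 ^ l' := by
        apply Nat.mul_le_mul_right
        nlinarith
    _ = r * 2 ^ l := by rw [hle, pow_add]; ring

lemma splitW {β : X → X → Submodule O V} (hsym : ∀ i j, i ≠ j → β i j = β j i)
    (hult : ∀ i j l, i ≠ j → i ≠ l → l ≠ j → β i j ≤ β i l ∨ β i j ≤ β l j)
    (Q : Finset X) (hQ : 2 ≤ Q.card) :
    ∃ Q₁ ⊆ Q, ∃ b : Submodule O V, Q₁.Nonempty ∧ (Q \ Q₁).Nonempty ∧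
      (∃ i ∈ Q, ∃ j ∈ Q, i ≠ j ∧ b = β i j) ∧
      (∀ i ∈ Q₁, ∀ j ∈ Q \ Q₁, b ≤ β i j ∧ b ≤ β j i) ∧
      (∀ i ∈ Q, ∀ j ∈ Q, i ≠ j → β i j ≤ b) := by
  have hne : Q.offDiag.Nonempty := by
    obtain ⟨i, hi, j, hj, hij⟩ := Finset.one_lt_card.1 hQ
    exact ⟨(i, j), by simp [hi, hj, hij]⟩
  obtain ⟨⟨i₀, j₀⟩, hmem, hmax⟩ := Q.offDiag.exists_maximalFor (fun p => β p.1 p.2) hne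
  simp only [Finset.mem_offDiag] at hmem
  obtain ⟨hi₀, hj₀, hij⟩ := hmem
  have hmax' : ∀ i ∈ Q, ∀ j ∈ Q, i ≠ j → β i₀ j₀ ≤ β i j → β i j ≤ β i₀ j₀ := by
    intro i hi j hj h hle
    exact hmax (j := (i, j)) (by simp [hi, hj, h]) hle
  set b := β i₀ j₀ with hb
  set Q₁ := Q.filter (fun l => l = i₀ ∨ ¬ b ≤ β i₀ l) with hQ₁
  have hi₀' : i₀ ∈ Q₁ := by simp [hQ₁, hi₀]
  have hj₀' : j₀ ∈ Q \ Q₁ := by simp [hQ₁, hj₀, hij.symm, hb]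
  have hcr : ∀ i ∈ Q₁, ∀ j ∈ Q \ Q₁, i ≠ j ∧ b ≤ β i j := by
    intro i hi j hj
    have hj2 : j ∈ Q ∧ j ≠ i₀ ∧ b ≤ β i₀ j := by
      simp [hQ₁] at hj
      exact ⟨hj.1, (hj.2 hj.1).1, (hj.2 hj.1).2⟩
    have hne : i ≠ j := by
      rintro rfl
      exact (Finset.mem_sdiff.1 hj).2 hi
    refine ⟨hne, ?_⟩
    by_cases h : i = i₀
    · rw [h]; exact hj2.2.2
    · have hi2 : ¬ b ≤ β i₀ i := by
        simp [hQ₁, h] at hi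
        exact hi.2
      rcases hult i₀ j i hj2.2.1.symm (Ne.symm h) hne with h' | h'
      · exact absurd (hj2.2.2.trans h') hi2
      · exact hj2.2.2.trans h'
  have hsub : Q₁ ⊆ Q := Finset.filter_subset _ _
  have hcr' : ∀ i ∈ Q₁, ∀ j ∈ Q \ Q₁, β i j ≤ b := fun i hi j hj =>
    hmax' i (hsub hi) j (Finset.mem_sdiff.1 hj).1 (hcr i hi j hj).1 (hcr i hi j hj).2
  refine ⟨Q₁, hsub, b, ⟨i₀, hi₀'⟩, ⟨j₀, hj₀'⟩, ⟨i₀, hi₀, j₀, hj₀, hij, rfl⟩, ?_, ?_⟩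
  · intro i hi j hj
    have := hcr i hi j hj
    exact ⟨this.2, by rw [← hsym i j this.1]; exact this.2⟩
  · intro i hi j hj hne
    by_cases h1 : i ∈ Q₁ <;> by_cases h2 : j ∈ Q₁
    · have n1 := (hcr i h1 j₀ hj₀').1
      have n2 := (hcr j h2 j₀ hj₀').1
      rcases hult i j j₀ hne n1 n2.symm with h | h
      · exact h.trans (hcr' i h1 j₀ hj₀')
      · rw [← hsym _ _ n2] at h
        exact h.trans (hcr' j h2 j₀ hj₀')
    · exact hcr' i h1 j (by simp [hj, h2])
    · rw [hsym i j hne]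
      exact hcr' j h2 i (by simp [hi, h1])
    · have h1' : i ∈ Q \ Q₁ := by simp [hi, h1]
      have h2' : j ∈ Q \ Q₁ := by simp [hj, h2]
      have n1 := (hcr i₀ hi₀' i h1').1
      have n2 := (hcr i₀ hi₀' j h2').1
      rcases hult i j i₀ hne n1.symm n2 with h | h
      · rw [← hsym _ _ n1] at h
        exact h.trans (hcr' i₀ hi₀' i h1')
      · exact h.trans (hcr' i₀ hi₀' j h2')

lemma barW_pos {β : X → X → Submodule O V} {ξ : X → (V →ₗ[K] K)} {Q : Finset X}
    (hQ : Q.Nonempty) {B : Submodule O V} (h1 : restrW Q 1 ∈ modW O β ξ Q B) :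
    1 ≤ Module.finrank (IsLocalRing.ResidueField O) (barW (modW O β ξ Q B)) := by
  rw [Nat.one_le_iff_ne_zero]
  intro h
  rw [Submodule.finrank_eq_zero] at h
  have hm : redW O (restrW Q 1) ∈ barW (modW O β ξ Q B) := ⟨_, h1, rfl⟩
  rw [h, Submodule.mem_bot] at hm
  obtain ⟨i, hi⟩ := hQ
  have := congrFun hm i
  simp [redW, restrW, hi] at this

theorem treeW [FiniteDimensional K V] {β : X → X → Submodule O V}
    (hsym : ∀ i j, i ≠ j → β i j = β j i)
    (hult : ∀ i j l, i ≠ j → i ≠ l → l ≠ j → β i j ≤ β i l ∨ β i j ≤ β l j)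
    (ξ : X → (V →ₗ[K] K)) (n : ℕ) : ∀ (Q : Finset X), Q.card = n → Q.Nonempty →
    ∀ B : Submodule O V, (∀ i ∈ Q, ∀ j ∈ Q, i ≠ j → β i j ≤ B) →
    restrW Q 1 ∈ modW O β ξ Q B →
    ∃ W : Submodule K (V →ₗ[K] K),
      Q.card ≤ Module.finrank (IsLocalRing.ResidueField O) (barW (modW O β ξ Q B)) *
        2 ^ Module.finrank K W ∧
      ∀ w ∈ W, w ∈ dualW O B → ∃ t ∈ modW O β ξ Q B, redW O t = 0 ∧ sigW O ξ t = w := by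
  induction n using Nat.strong_induction_on with
  | _ n ih =>
  intro Q hn hQ B hB h1
  by_cases hc : Q.card ≤ 1
  · refine ⟨⊥, ?_, ?_⟩
    · rw [finrank_bot, pow_zero, mul_one]
      exact hc.trans (barW_pos hQ h1)
    · intro w hw _
      rw [Submodule.mem_bot] at hw
      subst hw
      exact ⟨0, Submodule.zero_mem _, redW_zero, sigW_zero ξ⟩
  · obtain ⟨Q₁, hsub, b, hne₁, hne₂, ⟨i, hi, j, hj, hij, hb⟩, hcr, hin⟩ :=
      splitW hsym hult Q (by omega)
    have hbB : b ≤ B := by rw [hb]; exact hB i hi j hj hij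
    set Q₂ := Q \ Q₁ with hQ₂
    have hU : Q₁ ∪ Q₂ = Q := Finset.union_sdiff_of_subset hsub
    have hdisj : Disjoint Q₁ Q₂ := Finset.disjoint_sdiff
    have hcard : Q₁.card + Q₂.card = Q.card := by
      rw [← Finset.card_union_of_disjoint hdisj, hU]
    have hsub₂ : Q₂ ⊆ Q := Finset.sdiff_subset
    have p₁ := hne₁.card_pos
    have p₂ := hne₂.card_pos
    have hQQ : Q \ Q₂ = Q₁ := by rw [hQ₂, Finset.sdiff_sdiff_eq_self hsub]
    have hr : ∀ c ∈ modW O β ξ Q B, restrW Q₁ c ∈ modW O β ξ Q₁ b ∧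
        restrW Q₂ c ∈ modW O β ξ Q₂ b := by
      intro c hc
      refine ⟨modW_node_restr hbB hsub hcr hc, modW_node_restr hbB hsub₂ ?_ hc⟩
      intro i hi j hj
      rw [hQQ] at hj
      exact (hcr j hj i hi).symm
    have hsum : ∀ c ∈ modW O β ξ Q B, restrW Q₁ c + restrW Q₂ c = c := by
      intro c hc
      ext i
      by_cases h1 : i ∈ Q₁
      · simp [restrW, h1, hQ₂]
      · by_cases h2 : i ∈ Q
        · simp [restrW, h1, h2, hQ₂]
        · simp [restrW, h1, h2, hQ₂, hc.1 i h2]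
    have hcut : modW O β ξ Q B = cutW ξ (modW O β ξ Q₁ b ⊔ modW O β ξ Q₂ b) B := by
      ext c
      constructor
      · intro hc
        refine ⟨?_, modW_sig hc⟩
        rw [← hsum c hc]
        exact Submodule.add_mem_sup (hr c hc).1 (hr c hc).2
      · rintro ⟨hc, hs⟩
        obtain ⟨a, ha, a', ha', rfl⟩ := Submodule.mem_sup.1 hc
        have := modW_node_mem (B := B) (by rw [hU]; exact hin) (by rw [hU]; exact hQ) ha ha' hs
        rwa [hU] at this
    have hre : ∀ R ⊆ Q, restrW R (restrW Q (1 : X → O)) = restrW R 1 := by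
      intro R hR
      ext i
      by_cases h : i ∈ R
      · simp [restrW, h, hR h]
      · simp [restrW, h]
    have h11 := hr _ h1
    rw [hre _ hsub, hre _ hsub₂] at h11
    obtain ⟨W₁, hW₁, hW₁'⟩ := ih Q₁.card (by omega) Q₁ rfl hne₁ b
      (fun i hi j hj => hin i (hsub hi) j (hsub hj)) h11.1
    obtain ⟨W₂, hW₂, hW₂'⟩ := ih Q₂.card (by omega) Q₂ rfl hne₂ b
      (fun i hi j hj => hin i (hsub₂ hi) j (hsub₂ hj)) h11.2
    have hrank : Module.finrank (IsLocalRing.ResidueField O)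
        (barW (modW O β ξ Q₁ b ⊔ modW O β ξ Q₂ b)) =
        Module.finrank (IsLocalRing.ResidueField O) (barW (modW O β ξ Q₁ b)) +
        Module.finrank (IsLocalRing.ResidueField O) (barW (modW O β ξ Q₂ b)) := by
      have := Submodule.finrank_sup_add_finrank_inf_eq (barW (modW O β ξ Q₁ b))
        (barW (modW O β ξ Q₂ b))
      have hbot : barW (modW O β ξ Q₁ b) ⊓ barW (modW O β ξ Q₂ b) = ⊥ := by
        rw [eq_bot_iff]
        rintro r ⟨⟨c, hc, hcr⟩, ⟨c', hc', hcr'⟩⟩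
        rw [Submodule.mem_bot]
        ext i
        by_cases hi : i ∈ Q₁
        · have : i ∉ Q₂ := fun h => Finset.disjoint_left.1 hdisj hi h
          rw [← hcr']
          simp [redW, hc'.1 i this]
        · rw [← hcr]
          simp [redW, hc.1 i hi]
      rw [hbot, finrank_bot, add_zero] at this
      rw [barW_sup, this]
    have hpos := barW_pos hQ h1
    have hmono : Module.finrank (IsLocalRing.ResidueField O) (barW (modW O β ξ Q B)) ≤
        Module.finrank (IsLocalRing.ResidueField O)
        (barW (modW O β ξ Q₁ b ⊔ modW O β ξ Q₂ b)) := by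
      apply Submodule.finrank_mono
      rintro _ ⟨c, hc, rfl⟩
      rw [hcut] at hc
      exact ⟨c, hc.1, rfl⟩
    have hMs : ∀ c ∈ modW O β ξ Q₁ b ⊔ modW O β ξ Q₂ b, sigW O ξ c ∈ dualW O b := by
      intro c hc
      obtain ⟨a, ha, a', ha', rfl⟩ := Submodule.mem_sup.1 hc
      rw [sigW_add]
      exact Submodule.add_mem _ (modW_sig ha) (modW_sig ha')
    rw [hrank] at hmono
    rcases le_total (Module.finrank K W₁) (Module.finrank K W₂) with hl | hl
    · obtain ⟨W, hWr, hW⟩ := cutW_step ξ (modW O β ξ Q₁ b ⊔ modW O β ξ Q₂ b) hbB hMs W₂ (by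
        intro w hw hwb
        obtain ⟨t, ht, h⟩ := hW₂' w hw hwb
        exact ⟨t, Submodule.mem_sup_right ht, h⟩)
      rw [← hcut] at hWr hW
      rw [hrank] at hWr
      exact ⟨W, by rw [← hcard]; exact arithW hW₁ hW₂ hl le_rfl hpos hmono hWr, hW⟩
    · obtain ⟨W, hWr, hW⟩ := cutW_step ξ (modW O β ξ Q₁ b ⊔ modW O β ξ Q₂ b) hbB hMs W₁ (by
        intro w hw hwb
        obtain ⟨t, ht, h⟩ := hW₁' w hw hwb
        exact ⟨t, Submodule.mem_sup_left ht, h⟩)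
      rw [← hcut] at hWr hW
      rw [hrank] at hWr
      exact ⟨W, by rw [← hcard]; exact arithW hW₁ hW₂ le_rfl hl hpos hmono hWr, hW⟩

/-- Key algebraic statement: if there are many points, there is an admissible weight that is
not constant modulo the maximal ideal. -/
theorem keyW [FiniteDimensional K V] {β : X → X → Submodule O V}
    (hsym : ∀ i j, i ≠ j → β i j = β j i)
    (hult : ∀ i j l, i ≠ j → i ≠ l → l ≠ j → β i j ≤ β i l ∨ β i j ≤ β l j)
    (ξ : X → (V →ₗ[K] K)) (hcard : 2 ^ Module.finrank K V < Fintype.card X)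
    (h1 : ∀ P : X → V, (∀ i j, i ≠ j → P i - P j ∈ β i j) → (∑ i, ξ i (P i)) ∈ O) :
    ∃ c : X → O, (∀ P : X → V, (∀ i j, i ≠ j → P i - P j ∈ β i j) →
      (∑ i, (c i : K) * ξ i (P i)) ∈ O) ∧ ∃ i j, IsUnit (c i - c j) := by
  have hmem : restrW Finset.univ 1 ∈ modW O β ξ Finset.univ ⊤ := by
    refine ⟨by simp, fun P hP => ?_⟩
    simpa [restrW] using h1 P (fun i j => hP.2 i (by simp) j (by simp))
  have hne : (Finset.univ : Finset X).Nonempty := by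
    rw [← Finset.card_pos, Finset.card_univ]; exact lt_of_le_of_lt (Nat.zero_le _) hcard
  obtain ⟨W, hW, -⟩ := treeW hsym hult ξ _ Finset.univ rfl hne ⊤ (by simp) hmem
  have hWd : Module.finrank K W ≤ Module.finrank K V := by
    refine (Submodule.finrank_le W).trans ?_
    exact (Subspace.dual_finrank_eq (K := K) (V := V)).le
  have h2 : 1 < Module.finrank (IsLocalRing.ResidueField O)
      (barW (modW O β ξ Finset.univ ⊤)) := by
    by_contra h
    push Not at h
    rw [Finset.card_univ] at hW
    have : 2 ^ Module.finrank K W ≤ 2 ^ Module.finrank K V :=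
      Nat.pow_le_pow_right (by norm_num) hWd
    have := Nat.mul_le_mul_right (2 ^ Module.finrank K W) h
    omega
  obtain ⟨i₀, -⟩ := hne
  by_contra hcon
  push Not at hcon
  have : barW (modW O β ξ Finset.univ ⊤) ≤
      Submodule.span (IsLocalRing.ResidueField O) {(1 : X → IsLocalRing.ResidueField O)} := by
    rintro _ ⟨c, hc, rfl⟩
    rw [Submodule.mem_span_singleton]
    refine ⟨IsLocalRing.residue O (c i₀), ?_⟩
    ext i
    have := hcon c (fun P hP => hc.2 P ⟨by simp, fun i _ j _ => hP i j⟩) i₀ i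
    rw [← IsLocalRing.residue_ne_zero_iff_isUnit, not_not, map_sub, sub_eq_zero] at this
    simp [redW, this]
  have h3 := (Submodule.finrank_mono this).trans (finrank_span_le_card _)
  simp at h3
  omega

end AlgPart

section HyperPart

/-- The ultrafilter used. -/
abbrev hypF : Ultrafilter ℕ := Filter.hyperfilter ℕ

/-- The hyperreals. -/
abbrev HypR : Type := Filter.Germ (hypF : Filter ℕ) ℝ

/-- Finite hyperreals form a valuation subring. -/
def finHyp : ValuationSubring HypR where
  carrier := {x | ∃ r : ℕ, |x| ≤ r}
  mul_mem' := by
    rintro a b ⟨r, hr⟩ ⟨s, hs⟩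
    refine ⟨r * s, ?_⟩
    rw [abs_mul]; push_cast
    exact mul_le_mul hr hs (abs_nonneg _) (by positivity)
  one_mem' := ⟨1, by simp⟩
  add_mem' := by
    rintro a b ⟨r, hr⟩ ⟨s, hs⟩
    refine ⟨r + s, ?_⟩
    push_cast
    exact (abs_add_le _ _).trans (add_le_add hr hs)
  zero_mem' := ⟨0, by simp⟩
  neg_mem' := by
    rintro a ⟨r, hr⟩
    exact ⟨r, by rwa [abs_neg]⟩
  mem_or_inv_mem' := by
    intro x
    rcases le_total |x| 1 with h | h
    · left; exact ⟨1, by simpa using h⟩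
    · right; refine ⟨1, ?_⟩
      rw [abs_inv]; simpa using inv_le_one_of_one_le₀ h

theorem mem_finHyp_coe (u : ℕ → ℝ) :
    ((u : HypR) ∈ finHyp) ↔ ∃ r : ℕ, ∀ᶠ ν in (hypF : Filter ℕ), |u ν| ≤ r := by
  show (∃ r : ℕ, |(u : HypR)| ≤ r) ↔ _
  refine exists_congr fun r => ?_
  have : ((r : HypR)) = ((fun _ : ℕ => (r : ℝ)) : ℕ → ℝ) := by
    rfl
  rw [Filter.Germ.abs_def, this]
  exact Filter.Germ.coe_le

theorem coe_sum_hyp {A : Type*} (s : Finset A) (f : A → ℕ → ℝ) :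
    ((fun ν => ∑ a ∈ s, f a ν : ℕ → ℝ) : HypR) = ∑ a ∈ s, ((f a : ℕ → ℝ) : HypR) := by
  have h := map_sum (Filter.Germ.coeRingHom (hypF : Filter ℕ) : (ℕ → ℝ) →+* HypR) f s
  have h2 : (fun ν => ∑ a ∈ s, f a ν) = ∑ a ∈ s, f a := by ext ν; simp
  rw [h2]; exact h

variable {ι : Type} [Fintype ι]

/-- The submodule of vectors with finite seminorm. -/
def hypB (N : ℕ → Seminorm ℝ (ι → ℝ)) : Submodule finHyp (ι → HypR) where
  carrier := {p | ∃ q : ℕ → ι → ℝ, (∀ a, p a = ((fun ν => q ν a : ℕ → ℝ) : HypR)) ∧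
    ∃ r : ℕ, ∀ᶠ ν in (hypF : Filter ℕ), N ν (q ν) ≤ r}
  add_mem' := by
    rintro p p' ⟨q, hq, r, hr⟩ ⟨q', hq', r', hr'⟩
    refine ⟨fun ν => q ν + q' ν, fun a => ?_, r + r', ?_⟩
    · rw [Pi.add_apply, hq, hq']; rfl
    · filter_upwards [hr, hr'] with ν h h'
      push_cast
      exact (map_add_le_add _ _ _).trans (add_le_add h h')
  zero_mem' := ⟨fun _ => 0, fun a => rfl, 0, by simp⟩
  smul_mem' := by
    rintro ⟨c, hc⟩ p ⟨q, hq, r, hr⟩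
    obtain ⟨γ, rfl⟩ := Quot.exists_rep c
    obtain ⟨s, hs⟩ := (mem_finHyp_coe γ).1 hc
    refine ⟨fun ν => γ ν • q ν, fun a => ?_, s * r, ?_⟩
    · show _ * p a = _
      rw [hq]; rfl
    · filter_upwards [hr, hs] with ν h h'
      rw [map_smul_eq_mul]; push_cast
      exact mul_le_mul h' h (apply_nonneg _ _) (by positivity)

theorem mem_hypB (N : ℕ → Seminorm ℝ (ι → ℝ)) (p : ι → HypR) (q : ℕ → ι → ℝ)
    (hq : ∀ a, p a = ((fun ν => q ν a : ℕ → ℝ) : HypR)) :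
    p ∈ hypB N ↔ ∃ r : ℕ, ∀ᶠ ν in (hypF : Filter ℕ), N ν (q ν) ≤ r := by
  constructor
  · rintro ⟨q', hq', r, hr⟩
    refine ⟨r, ?_⟩
    have : ∀ᶠ ν in (hypF : Filter ℕ), ∀ a, q ν a = q' ν a := by
      rw [Filter.eventually_all]
      intro a
      have := (hq a).symm.trans (hq' a)
      exact Filter.Germ.coe_eq.1 this
    filter_upwards [hr, this] with ν h h'
    rwa [show q ν = q' ν from funext h']
  · rintro ⟨r, hr⟩
    exact ⟨q, hq, r, hr⟩

theorem hypB_mono (N N' : ℕ → Seminorm ℝ (ι → ℝ)) (C : ℝ)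
    (h : ∀ᶠ ν in (hypF : Filter ℕ), ∀ p, N' ν p ≤ C * N ν p) : hypB N ≤ hypB N' := by
  rintro p ⟨q, hq, r, hr⟩
  obtain ⟨s, hs⟩ := exists_nat_ge |C|
  refine ⟨q, hq, s * r, ?_⟩
  filter_upwards [h, hr] with ν h1 h2
  push_cast
  calc N' ν (q ν) ≤ C * N ν (q ν) := h1 _
    _ ≤ s * N ν (q ν) := by
        gcongr
        exact (le_abs_self C).trans hs
    _ ≤ s * r := by gcongr

/-- Functional on the hyperreal space. -/
def hypL (ξ : ℕ → ((ι → ℝ) →ₗ[ℝ] ℝ)) : (ι → HypR) →ₗ[HypR] HypR :=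
  ∑ a, ((fun ν => ξ ν (Pi.single a 1) : ℕ → ℝ) : HypR) • LinearMap.proj a

theorem hypL_coe (ξ : ℕ → ((ι → ℝ) →ₗ[ℝ] ℝ)) (p : ι → HypR) (q : ℕ → ι → ℝ)
    (hq : ∀ a, p a = ((fun ν => q ν a : ℕ → ℝ) : HypR)) :
    hypL ξ p = ((fun ν => ξ ν (q ν) : ℕ → ℝ) : HypR) := by
  have h : (fun ν => ξ ν (q ν)) = fun ν => ∑ a, (ξ ν (Pi.single a 1) * q ν a) := by
    ext ν
    rw [LinearMap.pi_apply_eq_sum_univ (ξ ν) (q ν)]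
    refine Finset.sum_congr rfl fun a _ => ?_
    rw [smul_eq_mul, mul_comm]
    congr 2
    ext b; simp [Pi.single_apply, eq_comm]
  rw [h, coe_sum_hyp]
  simp only [hypL, LinearMap.sum_apply, LinearMap.smul_apply, LinearMap.proj_apply, smul_eq_mul]
  refine Finset.sum_congr rfl fun a _ => ?_
  rw [hq]; rfl

end HyperPart

section RealPart

/-- Real version of the key statement, obtained through the hyperreals. -/
theorem realKey (ι : Type) [Fintype ι] (k : ℕ) (hk : 2 ^ Fintype.card ι < k) (C0 : ℝ) :
    ∃ C : ℝ, 0 ≤ C ∧ ∀ N : Fin k → Fin k → Seminorm ℝ (ι → ℝ),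
      (∀ i j, i ≠ j → ∀ p, N j i p ≤ C0 * N i j p) →
      (∀ i j l, i ≠ j → i ≠ l → l ≠ j →
        (∀ p, N i l p ≤ C0 * N i j p) ∨ (∀ p, N l j p ≤ C0 * N i j p)) →
      ∀ ξ : Fin k → ((ι → ℝ) →ₗ[ℝ] ℝ),
      (∀ P : Fin k → ι → ℝ, (∀ i j, i ≠ j → N i j (P i - P j) ≤ 1) → |∑ i, ξ i (P i)| ≤ 1) →
      ∃ (c : Fin k → ℝ) (i0 i1 : Fin k), (∀ i, 0 ≤ c i ∧ c i ≤ 1) ∧ c i0 = 0 ∧ c i1 = 1 ∧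
        ∀ P : Fin k → ι → ℝ, (∀ i j, i ≠ j → N i j (P i - P j) ≤ 1) →
          |∑ i, c i * ξ i (P i)| ≤ C := by
  by_contra hcon
  push Not at hcon
  have hcon' := fun ν : ℕ => hcon ν (Nat.cast_nonneg ν)
  choose N hsym hult ξ hξ hbad using hcon'
  have hkpos : 0 < k := lt_of_le_of_lt (Nat.zero_le _) hk
  haveI : Nonempty (Fin k) := ⟨⟨0, hkpos⟩⟩
  -- functionals scale
  have hscale : ∀ (ν : ℕ) (s : ℝ), 0 < s → ∀ P : Fin k → ι → ℝ,
      (∀ i j, i ≠ j → N ν i j (P i - P j) ≤ s) → |∑ i, ξ ν i (P i)| ≤ s := by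
    intro ν s hs P hP
    have := hξ ν (fun i => s⁻¹ • P i) (by
      intro i j hij
      rw [← smul_sub, map_smul_eq_mul, Real.norm_of_nonneg (by positivity)]
      have := hP i j hij
      rw [inv_mul_le_iff₀ hs]; simpa using this)
    simp only [map_smul, smul_eq_mul, ← Finset.mul_sum, abs_mul, abs_inv, abs_of_pos hs] at this
    rw [inv_mul_le_iff₀ hs] at this; simpa using this
  obtain ⟨c, hc, i₀, j₀, hu⟩ := keyW (K := HypR) (V := ι → HypR) (X := Fin k) (O := finHyp)
    (β := fun i j => hypB (fun ν => N ν i j)) (by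
      intro i j hij
      apply le_antisymm
      · exact hypB_mono _ _ C0 (Filter.Eventually.of_forall fun ν => hsym ν i j hij)
      · exact hypB_mono _ _ C0 (Filter.Eventually.of_forall fun ν => hsym ν j i hij.symm))
    (by
      intro i j l hij hil hlj
      have : ∀ᶠ ν in (hypF : Filter ℕ), (∀ p, N ν i l p ≤ C0 * N ν i j p) ∨
          (∀ p, N ν l j p ≤ C0 * N ν i j p) :=
        Filter.Eventually.of_forall fun ν => hult ν i j l hij hil hlj
      rw [Ultrafilter.eventually_or] at this
      rcases this with h | h
      · exact Or.inl (hypB_mono _ _ C0 h)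
      · exact Or.inr (hypB_mono _ _ C0 h))
    (fun i => hypL (fun ν => ξ ν i)) (by simpa using hk) (by
      intro P hP
      choose q hq using fun i a => Quot.exists_rep (P i a)
      have hq' : ∀ i a, P i a = ((fun ν => q i a ν : ℕ → ℝ) : HypR) := fun i a => (hq i a).symm
      have hP' : ∀ i j, i ≠ j → ∃ r : ℕ, ∀ᶠ ν in (hypF : Filter ℕ),
          N ν i j ((fun a => q i a ν) - (fun a => q j a ν)) ≤ r := by
        intro i j hij
        refine (mem_hypB (fun ν => N ν i j) _ (fun ν => (fun a => q i a ν) - (fun a => q j a ν))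
          ?_).1 (hP i j hij)
        intro a
        rw [Pi.sub_apply, hq', hq']; rfl
      choose! r hr using hP'
      have hL : ∀ i, hypL (fun ν => ξ ν i) (P i) =
          ((fun ν => ξ ν i (fun a => q i a ν) : ℕ → ℝ) : HypR) :=
        fun i => hypL_coe _ _ (fun ν a => q i a ν) (hq' i)
      simp only [hL]
      rw [← coe_sum_hyp, mem_finHyp_coe]
      refine ⟨1 + ∑ i, ∑ j, r i j, ?_⟩
      have hall : ∀ᶠ ν in (hypF : Filter ℕ), ∀ i j, i ≠ j →
          N ν i j ((fun a => q i a ν) - (fun a => q j a ν)) ≤ r i j := by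
        simp only [Filter.eventually_all]
        exact fun i j hij => hr i j hij
      filter_upwards [hall] with ν hν
      refine hscale ν _ (by positivity) (fun i a => q i a ν) fun i j hij => (hν i j hij).trans ?_
      norm_cast
      have h1 : r i j ≤ ∑ j, r i j :=
        Finset.single_le_sum (f := fun j => r i j) (fun _ _ => Nat.zero_le _) (Finset.mem_univ j)
      have h2 : (∑ j, r i j) ≤ ∑ i, ∑ j, r i j :=
        Finset.single_le_sum (f := fun i => ∑ j, r i j) (fun _ _ => Nat.zero_le _)
          (Finset.mem_univ i)
      omega)
  choose γ hγ using fun i => Quot.exists_rep (c i : HypR)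
  have hγ' : ∀ i, (c i : HypR) = ((γ i : ℕ → ℝ) : HypR) := fun i => (hγ i).symm
  -- bounds on the coefficients
  have hb : ∀ i, ∃ r : ℕ, ∀ᶠ ν in (hypF : Filter ℕ), |γ i ν| ≤ r := by
    intro i
    rw [← mem_finHyp_coe, ← hγ']; exact (c i).2
  choose rb hrb using hb
  -- lower bound
  have hlow : ∃ s : ℕ, ∀ᶠ ν in (hypF : Filter ℕ), 1 ≤ s * |γ i₀ ν - γ j₀ ν| := by
    obtain ⟨v, hv⟩ := hu.exists_right_inv
    obtain ⟨w, hw⟩ := Quot.exists_rep (v : HypR)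
    have hw' : (v : HypR) = ((w : ℕ → ℝ) : HypR) := hw.symm
    have h1 : ((v : HypR)) ∈ finHyp := v.2
    rw [hw', mem_finHyp_coe] at h1
    obtain ⟨s, hs⟩ := h1
    have h2 : ((c i₀ : HypR) - c j₀) * v = 1 := by
      have := congrArg (fun z : finHyp => (z : HypR)) hv
      simpa using this
    rw [hγ', hγ', hw'] at h2
    have h3 : ∀ᶠ ν in (hypF : Filter ℕ), (γ i₀ ν - γ j₀ ν) * w ν = 1 :=
      Filter.Germ.coe_eq.1 h2
    refine ⟨s, ?_⟩
    filter_upwards [hs, h3] with ν h h'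
    have : (1 : ℝ) = |γ i₀ ν - γ j₀ ν| * |w ν| := by rw [← abs_mul, h', abs_one]
    rw [this, mul_comm]
    gcongr
  obtain ⟨s, hs⟩ := hlow
  have hmin : ∀ ν, ∃ i, ∀ j, γ i ν ≤ γ j ν := fun ν => by
    obtain ⟨i, hi⟩ := Finite.exists_min (fun i => γ i ν); exact ⟨i, hi⟩
  have hmax : ∀ ν, ∃ i, ∀ j, γ j ν ≤ γ i ν := fun ν => by
    obtain ⟨i, hi⟩ := Finite.exists_max (fun i => γ i ν); exact ⟨i, hi⟩
  choose a ha using hmin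
  choose b hb using hmax
  have hP : ∀ ν, ∃ P : Fin k → ι → ℝ, (∀ i j, i ≠ j → N ν i j (P i - P j) ≤ 1) ∧
      (0 < γ (b ν) ν - γ (a ν) ν →
        (ν : ℝ) < |∑ i, ((γ i ν - γ (a ν) ν) / (γ (b ν) ν - γ (a ν) ν)) * ξ ν i (P i)|) := by
    intro ν
    by_cases hpos : 0 < γ (b ν) ν - γ (a ν) ν
    · obtain ⟨P, h1, h2⟩ := hbad ν
        (fun i => (γ i ν - γ (a ν) ν) / (γ (b ν) ν - γ (a ν) ν)) (a ν) (b ν) (by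
          intro i
          have := ha ν i
          have := hb ν i
          constructor
          · apply div_nonneg <;> linarith
          · rw [div_le_one hpos]; linarith) (by simp) (by field_simp)
      exact ⟨P, h1, fun _ => h2⟩
    · exact ⟨0, by simp, fun h => absurd h hpos⟩
  choose P hP1 hP2 using hP
  have hfin := hc (fun i a => ((fun ν => P ν i a : ℕ → ℝ) : HypR)) (by
    intro i j hij
    refine (mem_hypB (fun ν => N ν i j) _ (fun ν => P ν i - P ν j) ?_).2 ⟨1, ?_⟩
    · intro a; rfl
    · exact Filter.Eventually.of_forall fun ν => by simpa using hP1 ν i j hij)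
  have hL : ∀ i, (c i : HypR) * hypL (fun ν => ξ ν i)
      (fun a => ((fun ν => P ν i a : ℕ → ℝ) : HypR)) =
      ((fun ν => γ i ν * ξ ν i (P ν i) : ℕ → ℝ) : HypR) := by
    intro i
    rw [hypL_coe (fun ν => ξ ν i) _ (fun ν => P ν i) (fun a => rfl), hγ']; rfl
  simp only [hL] at hfin
  rw [← coe_sum_hyp, mem_finHyp_coe] at hfin
  obtain ⟨R, hR⟩ := hfin
  have hall : ∀ᶠ ν in (hypF : Filter ℕ), ∀ i, |γ i ν| ≤ rb i := by
    simp only [Filter.eventually_all]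
    exact fun i => hrb i
  have hlarge : ∀ᶠ ν in (hypF : Filter ℕ), s * (R + ∑ i, rb i) < ν := by
    have h := Nat.hyperfilter_le_atTop
    exact h (Filter.eventually_gt_atTop (s * (R + ∑ i, rb i)))
  obtain ⟨ν, h1, h2, h3, h4⟩ := (hR.and (hall.and (hlarge.and hs))).exists
  set g := γ (b ν) ν - γ (a ν) ν with hg
  have hgap : |γ i₀ ν - γ j₀ ν| ≤ g := by
    have := ha ν i₀; have := ha ν j₀; have := hb ν i₀; have := hb ν j₀
    rw [abs_le]; constructor <;> linarith
  have hsg : 1 ≤ s * g := h4.trans (by gcongr)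
  have hgpos : 0 < g := by
    by_contra h
    have h0 : g ≤ 0 := not_lt.1 h
    have : (s : ℝ) * g ≤ 0 := mul_nonpos_of_nonneg_of_nonpos (by positivity) h0
    linarith
  have h5 := hP2 ν hgpos
  have h6 : ∑ i, ((γ i ν - γ (a ν) ν) / g) * ξ ν i (P ν i) =
      (∑ i, γ i ν * ξ ν i (P ν i) - γ (a ν) ν * ∑ i, ξ ν i (P ν i)) / g := by
    rw [Finset.mul_sum, ← Finset.sum_sub_distrib, Finset.sum_div]
    refine Finset.sum_congr rfl fun i _ => ?_
    ring
  rw [h6, abs_div, abs_of_pos hgpos, lt_div_iff₀ hgpos] at h5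
  have h7 : |γ (a ν) ν| ≤ ((∑ i, rb i : ℕ) : ℝ) := by
    refine (h2 (a ν)).trans ?_
    norm_cast
    exact Finset.single_le_sum (f := rb) (fun _ _ => Nat.zero_le _) (Finset.mem_univ _)
  have h8 : |∑ i, γ i ν * ξ ν i (P ν i) - γ (a ν) ν * ∑ i, ξ ν i (P ν i)| ≤
      R + ((∑ i, rb i : ℕ) : ℝ) := by
    refine (abs_sub _ _).trans (add_le_add h1 ?_)
    rw [abs_mul]
    calc _ ≤ ((∑ i, rb i : ℕ) : ℝ) * 1 := by
            gcongr
            exact hξ ν _ (hP1 ν)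
      _ = _ := mul_one _
  have h9 : ((s * (R + ∑ i, rb i) : ℕ) : ℝ) < (ν : ℝ) := by exact_mod_cast h3
  have h10 : (s * (R + ((∑ i, rb i : ℕ) : ℝ))) < (ν : ℝ) := by push_cast at h9 ⊢; exact h9
  have h11 : (ν : ℝ) * g < R + ((∑ i, rb i : ℕ) : ℝ) := lt_of_lt_of_le h5 h8
  have h12 : (0 : ℝ) ≤ R + ((∑ i, rb i : ℕ) : ℝ) := by positivity
  have h13 : (ν : ℝ) * (s * g) ≥ ν * 1 := by gcongr
  have h14 : s * ((ν : ℝ) * g) ≤ s * (R + ((∑ i, rb i : ℕ) : ℝ)) := by gcongr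
  nlinarith

end RealPart

section HBPart

theorem seminorm_cont_fd {ι : Type} [Fintype ι] (p : Seminorm ℝ (ι → ℝ)) : Continuous p := by
  have h := p.convexOn.continuousOn isOpen_univ
  exact continuousOn_univ.1 h

/-- Scaling a bound for a sum of functionals. -/
theorem scale_bound {ι : Type} [Fintype ι] {k : ℕ} {N : Fin k → Fin k → Seminorm ℝ (ι → ℝ)}
    {ζ : Fin k → ((ι → ℝ) →ₗ[ℝ] ℝ)} {A : ℝ}
    (h : ∀ P : Fin k → ι → ℝ, (∀ i j, i ≠ j → N i j (P i - P j) ≤ 1) → |∑ i, ζ i (P i)| ≤ A)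
    {s : ℝ} (hs : 0 < s) (P : Fin k → ι → ℝ)
    (hP : ∀ i j, i ≠ j → N i j (P i - P j) ≤ s) : |∑ i, ζ i (P i)| ≤ A * s := by
  have := h (fun i => s⁻¹ • P i) (by
    intro i j hij
    rw [← smul_sub, map_smul_eq_mul, Real.norm_of_nonneg (by positivity)]
    have := hP i j hij
    rw [inv_mul_le_iff₀ hs]; simpa using this)
  simp only [map_smul, smul_eq_mul, ← Finset.mul_sum, abs_mul, abs_inv, abs_of_pos hs] at this
  rw [inv_mul_le_iff₀ hs] at this; linarith

/-- The one-point-removal statement. -/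
theorem hbKey (ι : Type) [Fintype ι] (k : ℕ) (hk : 2 ^ Fintype.card ι < k) (C0 Ce : ℝ)
    (hCe : 1 ≤ Ce) :
    ∃ C : ℝ, 0 < C ∧ ∀ N : Fin k → Fin k → Seminorm ℝ (ι → ℝ),
      (∀ i j, i ≠ j → ∀ p, N j i p ≤ C0 * N i j p) →
      (∀ i j l, i ≠ j → i ≠ l → l ≠ j →
        (∀ p, N i l p ≤ C0 * N i j p) ∨ (∀ p, N l j p ≤ C0 * N i j p)) →
      (∀ x0, ∃ x1, x1 ≠ x0 ∧ ∀ z, z ≠ x0 → z ≠ x1 → ∀ p,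
        N z x0 p ≤ Ce * N z x1 p ∧ N x0 z p ≤ Ce * N z x1 p) →
      ∀ G : Fin k → Set (ι → ℝ), (∀ i, (G i).Nonempty ∧ Convex ℝ (G i)) →
      ∀ M : ℝ, 0 < M →
      (∀ x0, ∃ P : Fin k → ι → ℝ, (∀ i, i ≠ x0 → P i ∈ G i) ∧
        ∀ i j, i ≠ x0 → j ≠ x0 → i ≠ j → N i j (P i - P j) ≤ M) →
      ∃ P : Fin k → ι → ℝ, (∀ i, P i ∈ G i) ∧ ∀ i j, i ≠ j → N i j (P i - P j) ≤ C * M := by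
  obtain ⟨C1, hC1, hkey⟩ := realKey ι k hk C0
  refine ⟨(1 + 2 * C1) * Ce + 1, by positivity, ?_⟩
  intro N hsym hult hext G hG M hM hsel
  set C := (1 + 2 * C1) * Ce + 1 with hC
  have hCpos : 0 < C := by positivity
  have hCM : 0 < C * M := by positivity
  -- extended selections
  have hsel' : ∀ x0, ∃ P : Fin k → ι → ℝ, (∀ i, i ≠ x0 → P i ∈ G i) ∧
        ∀ i j, i ≠ j → N i j (P i - P j) ≤ Ce * M := by
    intro x0
    obtain ⟨P, hPG, hP⟩ := hsel x0
    obtain ⟨x1, h10, h1⟩ := hext x0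
    have hMM : M ≤ Ce * M := by nlinarith
    refine ⟨Function.update P x0 (P x1), fun i hi => by simpa [hi] using hPG i hi, ?_⟩
    intro i j hij
    by_cases hi : i = x0
    · subst hi
      have hj : j ≠ i := hij.symm
      rw [Function.update_self, Function.update_of_ne hj]
      by_cases hj1 : j = x1
      · subst hj1; simp; positivity
      · have := (h1 j hj hj1 (P x1 - P j)).2
        refine this.trans ?_
        rw [map_sub_rev]
        have := hP j x1 hj h10 hj1
        gcongr
    · rw [Function.update_of_ne hi]
      by_cases hj : j = x0
      · subst hj
        rw [Function.update_self]
        by_cases hi1 : i = x1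
        · subst hi1; simp; positivity
        · have := (h1 i hi hi1 (P i - P x1)).1
          refine this.trans ?_
          have := hP i x1 hi h10 hi1
          gcongr
      · rw [Function.update_of_ne hj]
        exact (hP i j hi hj hij).trans hMM
  by_contra hcon
  push Not at hcon
  let U : Set (Fin k → ι → ℝ) := {P | ∀ i j, i ≠ j → N i j (P i - P j) < C * M}
  let T : Set (Fin k → ι → ℝ) := {P | ∀ i, P i ∈ G i}
  have hUo : IsOpen U := by
    have : U = ⋂ i, ⋂ j, ⋂ (_ : i ≠ j), {P | N i j (P i - P j) < C * M} := by
      ext P; simp [U]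
    rw [this]
    refine isOpen_iInter_of_finite fun i => isOpen_iInter_of_finite fun j =>
      isOpen_iInter_of_finite fun _ => ?_
    refine isOpen_lt ?_ continuous_const
    exact (seminorm_cont_fd (N i j)).comp (by fun_prop)
  have hUc : Convex ℝ U := by
    intro P hP Q hQ a b ha hb hab i j hij
    have h1 := hP i j hij
    have h2 := hQ i j hij
    have h3 : (a • P + b • Q) i - (a • P + b • Q) j = a • (P i - P j) + b • (Q i - Q j) := by
      simp only [Pi.add_apply, Pi.smul_apply, smul_sub]; abel
    rw [h3]
    refine lt_of_le_of_lt (map_add_le_add _ _ _) ?_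
    rw [map_smul_eq_mul, map_smul_eq_mul, Real.norm_of_nonneg ha, Real.norm_of_nonneg hb]
    rcases ha.eq_or_lt with rfl | ha'
    · have : b = 1 := by linarith
      subst this; simpa using h2
    · have : a * N i j (P i - P j) < a * (C * M) := by gcongr
      have : b * N i j (Q i - Q j) ≤ b * (C * M) := by gcongr
      have : a * (C * M) + b * (C * M) = C * M := by rw [← add_mul, hab, one_mul]
      linarith
  have hTc : Convex ℝ T := by
    intro P hP Q hQ a b ha hb hab i
    exact (hG i).2 (hP i) (hQ i) ha hb hab
  have hdisj : Disjoint U T := by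
    rw [Set.disjoint_left]
    intro P hPU hPT
    obtain ⟨i, j, hij, h⟩ := hcon P hPT
    exact absurd (hPU i j hij) (not_lt.2 h.le)
  obtain ⟨f, u, hfU, hfT⟩ := geometric_hahn_banach_open hUc hUo hTc hdisj
  have hu : 0 < u := by
    have := hfU 0 (by intro i j _; simpa using hCM)
    simpa using this
  let ξ : Fin k → ((ι → ℝ) →ₗ[ℝ] ℝ) := fun i =>
    (C * M / u) • ((f : (Fin k → ι → ℝ) →ₗ[ℝ] ℝ) ∘ₗ LinearMap.single ℝ (fun _ => ι → ℝ) i)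
  have hξ : ∀ P : Fin k → ι → ℝ, ∑ i, ξ i (P i) = C * M / u * f P := by
    intro P
    simp only [ξ, LinearMap.smul_apply, LinearMap.comp_apply, smul_eq_mul, ← Finset.mul_sum]
    congr 1
    rw [← map_sum]
    have h := Finset.univ_sum_single P
    conv_rhs => rw [← h]
    rfl
  have hone : ∀ P : Fin k → ι → ℝ, (∀ i j, i ≠ j → N i j (P i - P j) ≤ 1) →
      ∑ i, ξ i (P i) ≤ 1 := by
    intro P hP
    rw [hξ]
    by_contra hlt
    push Not at hlt
    have h1 : u < C * M * f P := by
      rw [div_mul_eq_mul_div, lt_div_iff₀ hu] at hlt; linarith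
    have hfP : 0 < f P := by
      by_contra h
      have : C * M * f P ≤ 0 := mul_nonpos_of_nonneg_of_nonpos hCM.le (not_lt.1 h)
      linarith
    have h2 : u / f P < C * M := by rw [div_lt_iff₀ hfP]; exact h1
    have := hfU ((u / f P) • P) (by
      intro i j hij
      rw [Pi.smul_apply, Pi.smul_apply, ← smul_sub, map_smul_eq_mul,
        Real.norm_of_nonneg (by positivity)]
      have : u / f P * N i j (P i - P j) ≤ u / f P * 1 := by
        have := hP i j hij
        gcongr
      linarith)
    rw [map_smul, smul_eq_mul, div_mul_cancel₀ _ hfP.ne'] at this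
    exact lt_irrefl _ this
  have hone' : ∀ P : Fin k → ι → ℝ, (∀ i j, i ≠ j → N i j (P i - P j) ≤ 1) →
      |∑ i, ξ i (P i)| ≤ 1 := by
    intro P hP
    rw [abs_le]
    refine ⟨?_, hone P hP⟩
    have := hone (-P) (by
      intro i j hij
      rw [Pi.neg_apply, Pi.neg_apply, ← neg_sub', map_neg_eq_map]
      exact hP i j hij)
    simp only [Pi.neg_apply, map_neg, Finset.sum_neg_distrib] at this
    linarith
  obtain ⟨c, i0, i1, hc, hc0, hc1, hcb⟩ := hkey N hsym hult ξ hone'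
  obtain ⟨P1, hP1G, hP1⟩ := hsel' i1
  obtain ⟨P2, hP2G, hP2⟩ := hsel' i0
  have hs : 0 < Ce * M := by positivity
  let Q : Fin k → ι → ℝ := fun i => (1 - c i) • P1 i + c i • P2 i
  have hQT : Q ∈ T := by
    intro i
    show (1 - c i) • P1 i + c i • P2 i ∈ G i
    by_cases h1 : i = i1
    · subst h1
      have hne : i ≠ i0 := by rintro rfl; rw [hc0] at hc1; exact zero_ne_one hc1
      simpa [hc1] using hP2G i hne
    · by_cases h0 : i = i0
      · subst h0
        simpa [hc0] using hP1G i h1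
      · exact (hG i).2 (hP1G i h1) (hP2G i h0) (by linarith [(hc i).2]) (hc i).1 (by ring)
  have hcb' : ∀ P : Fin k → ι → ℝ, (∀ i j, i ≠ j → N i j (P i - P j) ≤ 1) →
      |∑ i, (c i • ξ i) (P i)| ≤ C1 := by
    intro P hP; simpa using hcb P hP
  have b1 := scale_bound hone' hs P1 hP1
  have b2 := scale_bound hcb' hs P1 hP1
  have b3 := scale_bound hcb' hs P2 hP2
  have hge : C * M ≤ ∑ i, ξ i (Q i) := by
    rw [hξ]
    have := hfT Q hQT
    rw [div_mul_eq_mul_div, le_div_iff₀ hu]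
    gcongr
  have heq : ∑ i, ξ i (Q i) = ∑ i, ξ i (P1 i) - ∑ i, (c i • ξ i) (P1 i) +
      ∑ i, (c i • ξ i) (P2 i) := by
    rw [← Finset.sum_sub_distrib, ← Finset.sum_add_distrib]
    refine Finset.sum_congr rfl fun i _ => ?_
    simp only [Q, map_add, map_smul, LinearMap.smul_apply, smul_eq_mul]; ring
  rw [heq] at hge
  have b1' := (abs_le.1 b1).2
  have b2' := (abs_le.1 b2).1
  have b3' := (abs_le.1 b3).2
  have : C * M = (1 + 2 * C1) * (Ce * M) + M := by rw [hC]; ring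
  nlinarith

end HBPart

section PolyPart

open MvPolynomial

theorem pderiv_comm_poly {n : ℕ} (i j : Fin n) (p : MvPolynomial (Fin n) ℝ) :
    pderiv i (pderiv j p) = pderiv j (pderiv i p) := by
  have h : ⁅(pderiv i : Derivation ℝ (MvPolynomial (Fin n) ℝ) (MvPolynomial (Fin n) ℝ)),
      (pderiv j : Derivation ℝ (MvPolynomial (Fin n) ℝ) (MvPolynomial (Fin n) ℝ))⁆ = 0 := by
    apply MvPolynomial.derivation_ext
    intro l
    rw [Derivation.commutator_apply, pderiv_X, pderiv_X, Derivation.zero_apply]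
    rcases eq_or_ne l i with rfl | h1 <;> rcases eq_or_ne l j with rfl | h2 <;>
      simp [Pi.single_apply, *]
    all_goals (split_ifs <;> simp)
  have := congrArg (fun D : Derivation ℝ (MvPolynomial (Fin n) ℝ) (MvPolynomial (Fin n) ℝ) => D p) h
  simp only [Derivation.commutator_apply, Derivation.zero_apply] at this
  exact sub_eq_zero.1 this

/-- Iterated derivative along a list. -/
def listPD {n : ℕ} (l : List (Fin n)) (α : Fin n → ℕ) (p : MvPolynomial (Fin n) ℝ) :
    MvPolynomial (Fin n) ℝ :=
  l.foldr (fun i q => (fun r => MvPolynomial.pderiv i r)^[α i] q) p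

theorem listPD_cons {n : ℕ} (i : Fin n) (l : List (Fin n)) (α : Fin n → ℕ)
    (p : MvPolynomial (Fin n) ℝ) :
    listPD (i :: l) α p = (fun r => MvPolynomial.pderiv i r)^[α i] (listPD l α p) := rfl

theorem pderiv_iter_comm {n : ℕ} (i j : Fin n) (k : ℕ) (p : MvPolynomial (Fin n) ℝ) :
    pderiv i ((fun r => pderiv j r)^[k] p) = (fun r => pderiv j r)^[k] (pderiv i p) := by
  induction k with
  | zero => rfl
  | succ k ih => rw [Function.iterate_succ_apply', pderiv_comm_poly, ih,
      Function.iterate_succ_apply']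

theorem listPD_congr {n : ℕ} (l : List (Fin n)) (α β : Fin n → ℕ) (h : ∀ i ∈ l, α i = β i)
    (p : MvPolynomial (Fin n) ℝ) : listPD l α p = listPD l β p := by
  induction l with
  | nil => rfl
  | cons a l ih =>
    rw [listPD_cons, listPD_cons, ih (fun i hi => h i (List.mem_cons_of_mem _ hi)),
      h a List.mem_cons_self]

theorem listPD_succ {n : ℕ} (l : List (Fin n)) (hl : l.Nodup) (α : Fin n → ℕ) (i : Fin n)
    (hi : i ∈ l) (p : MvPolynomial (Fin n) ℝ) :
    listPD l (Function.update α i (α i + 1)) p = pderiv i (listPD l α p) := by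
  induction l with
  | nil => simp at hi
  | cons a l ih =>
    rw [List.nodup_cons] at hl
    rw [listPD_cons, listPD_cons]
    by_cases h : a = i
    · subst h
      rw [Function.update_self, Function.iterate_succ_apply']
      congr 2
      apply listPD_congr
      intro j hj
      rw [Function.update_of_ne]
      rintro rfl; exact hl.1 hj
    · have hi' : i ∈ l := by
        rcases List.mem_cons.1 hi with h' | h'
        · exact absurd h'.symm h
        · exact h'
      rw [Function.update_of_ne h, ih hl.2 hi', pderiv_iter_comm]

theorem polyPD_succ {n : ℕ} (α : Fin n → ℕ) (i : Fin n) (p : MvPolynomial (Fin n) ℝ) :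
    polyPD (Function.update α i (α i + 1)) p = pderiv i (polyPD α p) :=
  listPD_succ _ (List.nodup_finRange n) α i (List.mem_finRange i) p

theorem iter_add_poly {n : ℕ} (i : Fin n) (k : ℕ) (p q : MvPolynomial (Fin n) ℝ) :
    (fun r => pderiv i r)^[k] (p + q) = (fun r => pderiv i r)^[k] p + (fun r => pderiv i r)^[k] q := by
  induction k with
  | zero => rfl
  | succ k ih => rw [Function.iterate_succ_apply', Function.iterate_succ_apply',
      Function.iterate_succ_apply', ih, map_add]

theorem iter_smul_poly {n : ℕ} (i : Fin n) (k : ℕ) (c : ℝ) (p : MvPolynomial (Fin n) ℝ) :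
    (fun r => pderiv i r)^[k] (c • p) = c • (fun r => pderiv i r)^[k] p := by
  induction k with
  | zero => rfl
  | succ k ih => rw [Function.iterate_succ_apply', Function.iterate_succ_apply', ih,
      Derivation.map_smul]

theorem listPD_add {n : ℕ} (l : List (Fin n)) (α : Fin n → ℕ) (p q : MvPolynomial (Fin n) ℝ) :
    listPD l α (p + q) = listPD l α p + listPD l α q := by
  induction l with
  | nil => rfl
  | cons a l ih => rw [listPD_cons, ih, iter_add_poly]; rfl

theorem listPD_smul {n : ℕ} (l : List (Fin n)) (α : Fin n → ℕ) (c : ℝ)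
    (p : MvPolynomial (Fin n) ℝ) : listPD l α (c • p) = c • listPD l α p := by
  induction l with
  | nil => rfl
  | cons a l ih => rw [listPD_cons, ih, iter_smul_poly]; rfl

/-- The functional `p ↦ ∂^α p (x)`. -/
def pdL {n : ℕ} (α : Fin n → ℕ) (x : En n) : MvPolynomial (Fin n) ℝ →ₗ[ℝ] ℝ where
  toFun p := polyPDval α p x
  map_add' p q := by
    show eval _ (listPD _ α (p + q)) = eval _ (listPD _ α p) + eval _ (listPD _ α q)
    rw [listPD_add, map_add]
  map_smul' c p := by
    show eval _ (listPD _ α (c • p)) = c • eval _ (listPD _ α p)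
    rw [listPD_smul, smul_eval, smul_eq_mul]

theorem pdL_apply {n : ℕ} (α : Fin n → ℕ) (x : En n) (p : MvPolynomial (Fin n) ℝ) :
    pdL α x p = polyPDval α p x := rfl

theorem totalDegree_pderiv_le' {n : ℕ} (i : Fin n) (k : ℕ) (p : MvPolynomial (Fin n) ℝ)
    (h : p.totalDegree ≤ k) : (pderiv i p).totalDegree ≤ k - 1 := by
  rw [p.as_sum, map_sum]
  refine totalDegree_finsetSum_le fun s hs => ?_
  rw [pderiv_monomial]
  by_cases h0 : s i = 0
  · simp [h0]
  · refine (totalDegree_monomial_le _ _).trans ?_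
    have h1 : (s.sum fun _ e => e) ≤ k := (le_totalDegree hs).trans h
    have h2 : s = (s - Finsupp.single i 1) + Finsupp.single i 1 := by
      ext j
      rcases eq_or_ne j i with rfl | hj
      · simp; omega
      · simp [Finsupp.single_apply, hj.symm]
    have h3 : (s.sum fun _ e => e) = ((s - Finsupp.single i 1).sum fun _ e => e) + 1 := by
      conv_lhs => rw [h2]
      rw [Finsupp.sum_add_index' (by simp) (by simp)]
      simp
    have h4 : ((s - Finsupp.single i 1).sum fun _ => id) =
        ((s - Finsupp.single i 1).sum fun _ e => e) := rfl
    omega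

theorem iter_degree {n : ℕ} (i : Fin n) (k d : ℕ) (p : MvPolynomial (Fin n) ℝ)
    (h : p.totalDegree ≤ d) : ((fun r => pderiv i r)^[k] p).totalDegree ≤ d - k := by
  induction k with
  | zero => simpa using h
  | succ k ih =>
    rw [Function.iterate_succ_apply']
    have := totalDegree_pderiv_le' i _ _ ih
    omega

theorem listPD_degree {n : ℕ} (l : List (Fin n)) (α : Fin n → ℕ) (d : ℕ)
    (p : MvPolynomial (Fin n) ℝ) (h : p.totalDegree ≤ d) :
    (listPD l α p).totalDegree ≤ d - (l.map α).sum := by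
  induction l with
  | nil => simpa [listPD] using h
  | cons a l ih =>
    rw [listPD_cons, List.map_cons, List.sum_cons]
    have := iter_degree a (α a) _ _ ih
    omega

theorem polyPD_degree {n : ℕ} (α : Fin n → ℕ) (d : ℕ)
    (p : MvPolynomial (Fin n) ℝ) (h : p.totalDegree ≤ d) :
    (polyPD α p).totalDegree ≤ d - ∑ i, α i := by
  have := listPD_degree (List.finRange n) α d p h
  rw [← List.ofFn_eq_map, List.sum_ofFn] at this
  exact this

theorem polyPD_eq_zero {n : ℕ} (α : Fin n → ℕ) (d : ℕ)
    (p : MvPolynomial (Fin n) ℝ) (h : p.totalDegree ≤ d) (hα : ∑ i, α i = d + 1) :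
    polyPD α p = 0 := by
  have : ∃ i, 0 < α i := by
    by_contra hc
    push Not at hc
    have : ∑ i, α i = 0 := Finset.sum_eq_zero fun i _ => Nat.le_zero.1 (hc i)
    omega
  obtain ⟨i, hi⟩ := this
  set β := Function.update α i (α i - 1) with hβ
  have h1 : α = Function.update β i (β i + 1) := by
    ext j
    rcases eq_or_ne j i with rfl | hj
    · simp [hβ]; omega
    · simp [hβ, hj]
  have h2 : ∑ j, α j = ∑ j, β j + 1 := by
    rw [h1, Finset.sum_update_of_mem (Finset.mem_univ i), ← Finset.add_sum_erase _ β
      (Finset.mem_univ i), Finset.sdiff_singleton_eq_erase]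
    ring
  rw [h1, polyPD_succ]
  have h3 := polyPD_degree β d p h
  have h4 : (polyPD β p).totalDegree = 0 := by omega
  rw [totalDegree_eq_zero_iff_eq_C] at h4
  rw [h4, pderiv_C]

theorem sum_update_succ {n : ℕ} (α : Fin n → ℕ) (i : Fin n) :
    ∑ j, Function.update α i (α i + 1) j = ∑ j, α j + 1 := by
  rw [Finset.sum_update_of_mem (Finset.mem_univ i), ← Finset.add_sum_erase _ α
      (Finset.mem_univ i), Finset.sdiff_singleton_eq_erase]
  ring

theorem hasDerivAt_poly {n : ℕ} (x v : Fin n → ℝ) (q : MvPolynomial (Fin n) ℝ) (t : ℝ) :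
    HasDerivAt (fun t : ℝ => eval (fun i => x i + t * v i) q)
      (∑ i, v i * eval (fun i => x i + t * v i) (pderiv i q)) t := by
  induction q using MvPolynomial.induction_on with
  | C a => simpa using hasDerivAt_const t a
  | add p q hp hq =>
    have := hp.add hq
    simp only [map_add, mul_add, Finset.sum_add_distrib]
    exact this
  | mul_X p j hp =>
    have h1 : HasDerivAt (fun t : ℝ => x j + t * v j) (v j) t := by
      simpa using ((hasDerivAt_id t).mul_const (v j)).const_add (x j)
    have := hp.mul h1
    simp only [map_mul, eval_X, pderiv_mul, map_add, pderiv_X]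
    refine this.congr_deriv ?_
    simp only [mul_add (v _), Finset.sum_add_distrib]
    congr 1
    · rw [Finset.sum_mul]; exact Finset.sum_congr rfl fun i _ => by ring
    · rw [Finset.sum_eq_single j]
      · simp; ring
      · intro b _ hb; simp [Pi.single_apply, hb.symm]
      · simp

/-- Change of base point. -/
theorem base_change {n m : ℕ} (hm : 1 ≤ m) (p : MvPolynomial (Fin n) ℝ)
    (hp : p.totalDegree ≤ m - 1) (x y : En n) (M : ℝ) (hM : 0 ≤ M)
    (h : ∀ α : Fin n → ℕ, ∑ i, α i ≤ m - 1 →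
      |polyPDval α p x| ≤ M * dist x y ^ (m - ∑ i, α i))
    (α : Fin n → ℕ) (hα : ∑ i, α i ≤ m - 1) :
    |polyPDval α p y| ≤ (n + 1) ^ m * M * dist x y ^ (m - ∑ i, α i) := by
  set v : Fin n → ℝ := fun i => y i - x i with hv
  set d := dist x y with hd
  have hd0 : 0 ≤ d := dist_nonneg
  have hvd : ∀ i, |v i| ≤ d := by
    intro i
    have h1 := EuclideanSpace.norm_eq (y - x)
    have h2 : ‖(y - x) i‖ ≤ ‖y - x‖ := PiLp.norm_apply_le (y - x) i
    rw [hd, dist_comm, dist_eq_norm]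
    simpa [hv] using h2
  have key : ∀ k : ℕ, ∀ α : Fin n → ℕ, ∑ i, α i + k = m → ∀ t ∈ Set.Icc (0 : ℝ) 1,
      |eval (fun i => x i + t * v i) (polyPD α p)| ≤ (n + 1) ^ k * M * d ^ k := by
    intro k
    induction k with
    | zero =>
      intro α hα t ht
      rw [polyPD_eq_zero α (m - 1) p hp (by omega)]
      simpa using hM
    | succ k ih =>
      intro α hα t ht
      have hder := fun s : ℝ => hasDerivAt_poly (fun i => x i) v (polyPD α p) s
      have hb : ∀ s ∈ Set.Icc (0 : ℝ) 1,
          ‖∑ i, v i * eval (fun i => x i + s * v i) (pderiv i (polyPD α p))‖ ≤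
            n * (d * ((n + 1) ^ k * M * d ^ k)) := by
        intro s hs
        refine (norm_sum_le _ _).trans ?_
        have : ∀ i ∈ (Finset.univ : Finset (Fin n)),
            ‖v i * eval (fun i => x i + s * v i) (pderiv i (polyPD α p))‖ ≤
              d * ((n + 1) ^ k * M * d ^ k) := by
          intro i _
          rw [← polyPD_succ, norm_mul]
          refine mul_le_mul (hvd i) (ih _ ?_ s hs) (norm_nonneg _) hd0
          rw [sum_update_succ]; omega
        refine (Finset.sum_le_card_nsmul _ _ _ this).trans ?_
        simp
      have hmv := Convex.norm_image_sub_le_of_norm_hasDerivWithin_le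
        (fun s _ => (hder s).hasDerivWithinAt) hb (convex_Icc 0 1)
        (Set.left_mem_Icc.2 zero_le_one) ht
      have h0 := h α (by omega)
      have hk : m - ∑ i, α i = k + 1 := by omega
      rw [hk] at h0
      have h0' : |eval (fun i => x i + 0 * v i) (polyPD α p)| ≤ M * d ^ (k + 1) := by
        simpa [polyPDval] using h0
      rw [Real.norm_eq_abs, Real.norm_eq_abs, sub_zero, abs_of_nonneg ht.1] at hmv
      set A := eval (fun i => x i + t * v i) (polyPD α p)
      set B := eval (fun i => x i + 0 * v i) (polyPD α p)
      have h1 : |A| ≤ |A - B| + |B| := by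
        have := abs_add_le (A - B) B
        simpa using this
      have h2 : (n : ℝ) * (d * ((n + 1) ^ k * M * d ^ k)) * t ≤
          n * (d * ((n + 1) ^ k * M * d ^ k)) :=
        mul_le_of_le_one_right (by positivity) ht.2
      have h3 : M * d ^ (k + 1) ≤ (n + 1) ^ k * (M * d ^ (k + 1)) := by
        refine le_mul_of_one_le_left (by positivity) ?_
        exact one_le_pow₀ (by linarith [(Nat.cast_nonneg n : (0 : ℝ) ≤ n)])
      have h4 : ((n : ℝ) + 1) ^ (k + 1) * M * d ^ (k + 1) =
          n * (d * ((n + 1) ^ k * M * d ^ k)) + (n + 1) ^ k * (M * d ^ (k + 1)) := by ring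
      linarith
  have hfin := key (m - ∑ i, α i) α (by omega) 1 (by simp)
  have he : (fun i => x i + 1 * v i) = fun i => y i := by ext i; simp [hv]
  rw [he] at hfin
  refine le_trans hfin ?_
  gcongr
  · linarith [(Nat.cast_nonneg n : (0 : ℝ) ≤ n)]
  · omega

end PolyPart

section WhitneyPart

open MvPolynomial

/-- Exponents of total degree less than `m`. -/
def monSet (n m : ℕ) : Finset (Fin n →₀ ℕ) :=
  (Finset.range m).biUnion fun t => Finset.finsuppAntidiag (Finset.univ : Finset (Fin n)) t

theorem mem_monSet {n m : ℕ} (s : Fin n →₀ ℕ) : s ∈ monSet n m ↔ (s.sum fun _ e => e) < m := by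
  rw [Finsupp.sum_fintype _ _ (by simp)]
  simp [monSet, Finset.mem_finsuppAntidiag]

theorem hockey (n m : ℕ) (hn : 1 ≤ n) (hm : 1 ≤ m) :
    ∑ t ∈ Finset.range m, Nat.choose (n + t - 1) t = Nat.choose (n + m - 1) n := by
  induction m, hm using Nat.le_induction with
  | base => simp
  | succ m hm ih =>
    rw [Finset.sum_range_succ, ih]
    obtain ⟨a, rfl⟩ : ∃ a, n = a + 1 := ⟨n - 1, by omega⟩
    have h1 : a + 1 + m - 1 = a + m := by omega
    have h2 : a + 1 + (m + 1) - 1 = (a + m) + 1 := by omega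
    rw [h1, h2, Nat.choose_succ_succ, add_comm]
    congr 1
    exact (Nat.choose_symm_add (a := a) (b := m)).symm

theorem card_monSet_le (n m : ℕ) (hn : 1 ≤ n) (hm : 1 ≤ m) :
    (monSet n m).card ≤ Nat.choose (n + m - 1) n := by
  rw [← hockey n m hn hm]
  refine Finset.card_biUnion_le.trans (Finset.sum_le_sum fun t _ => ?_)
  rw [Finset.card_finsuppAntidiag_nat_eq_choose]
  simp

/-- Coordinates on tuples of polynomials. -/
def coordL (n m D : ℕ) : ((Fin D × {s // s ∈ monSet n m}) → ℝ) →ₗ[ℝ]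
    (Fin D → MvPolynomial (Fin n) ℝ) :=
  LinearMap.pi fun j => ∑ s : {s // s ∈ monSet n m},
    (MvPolynomial.monomial (R := ℝ) s.1) ∘ₗ LinearMap.proj (j, s)

theorem coordL_apply (n m D : ℕ) (c) (j : Fin D) :
    coordL n m D c j = ∑ s : {s // s ∈ monSet n m}, MvPolynomial.monomial s.1 (c (j, s)) := by
  simp [coordL]

theorem coordL_degree (n m D : ℕ) (c) (j : Fin D) :
    (coordL n m D c j).totalDegree ≤ m - 1 := by
  rw [coordL_apply]
  refine totalDegree_finsetSum_le fun s _ => ?_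
  refine (totalDegree_monomial_le _ _).trans ?_
  have := (mem_monSet s.1).1 s.2
  have h4 : (s.1.sum fun _ => id) = (s.1.sum fun _ e => e) := rfl
  omega

theorem coordL_surj (n m D : ℕ) (hm : 1 ≤ m) (P : Fin D → MvPolynomial (Fin n) ℝ)
    (hP : ∀ j, (P j).totalDegree ≤ m - 1) : ∃ c, coordL n m D c = P := by
  refine ⟨fun a => coeff a.2.1 (P a.1), ?_⟩
  ext1 j
  rw [coordL_apply]
  rw [Finset.sum_coe_sort (monSet n m) (fun s => monomial s (coeff s (P j)))]
  conv_rhs => rw [(P j).as_sum]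
  symm
  refine Finset.sum_subset ?_ ?_
  · intro s hs
    rw [mem_monSet]
    have := (le_totalDegree hs).trans (hP j)
    omega
  · intro s _ hs
    rw [notMem_support_iff.1 hs, map_zero]

/-- Multi-indices of order at most `m - 1`. -/
def midx (n m : ℕ) : Finset (Fin n → ℕ) :=
  (Fintype.piFinset fun _ : Fin n => Finset.range m).filter fun α => ∑ i, α i ≤ m - 1

theorem mem_midx {n m : ℕ} (hm : 1 ≤ m) (α : Fin n → ℕ) : α ∈ midx n m ↔ ∑ i, α i ≤ m - 1 := by
  simp only [midx, Finset.mem_filter, Fintype.mem_piFinset, Finset.mem_range, and_iff_right_iff_imp]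
  intro h i
  have := Finset.single_le_sum (f := α) (fun _ _ => Nat.zero_le _) (Finset.mem_univ i)
  omega

/-- Pairwise Whitney seminorm. -/
def wS (m : ℕ) {n D : ℕ} (x y : En n) : Seminorm ℝ (Fin D → MvPolynomial (Fin n) ℝ) :=
  (midx n m ×ˢ (Finset.univ : Finset (Fin D))).sup fun a =>
    (normSeminorm ℝ ℝ).comp (((dist x y ^ (m - ∑ i, a.1 i))⁻¹) •
      (pdL a.1 x ∘ₗ LinearMap.proj a.2))

theorem le_wS {m n D : ℕ} (hm : 1 ≤ m) (x y : En n) (P : Fin D → MvPolynomial (Fin n) ℝ)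
    (α : Fin n → ℕ) (hα : ∑ i, α i ≤ m - 1) (j : Fin D) :
    |polyPDval α (P j) x| / dist x y ^ (m - ∑ i, α i) ≤ wS m x y P := by
  have h := Seminorm.le_finset_sup_apply (p := fun a : (Fin n → ℕ) × Fin D =>
    (normSeminorm ℝ ℝ).comp (((dist x y ^ (m - ∑ i, a.1 i))⁻¹) •
      (pdL a.1 x ∘ₗ LinearMap.proj a.2 : (Fin D → MvPolynomial (Fin n) ℝ) →ₗ[ℝ] ℝ)))
    (s := midx n m ×ˢ (Finset.univ : Finset (Fin D))) (x := P) (i := (α, j))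
    (by simp [mem_midx hm, hα])
  refine le_trans (le_of_eq ?_) h
  simp only [Seminorm.comp_apply, LinearMap.smul_apply, LinearMap.comp_apply,
    LinearMap.proj_apply, coe_normSeminorm, smul_eq_mul, norm_mul, norm_inv, norm_pow,
    Real.norm_eq_abs, pdL_apply, abs_of_nonneg (dist_nonneg (x := x) (y := y))]
  rw [div_eq_inv_mul]

theorem wS_le {m n D : ℕ} (hm : 1 ≤ m) (x y : En n) (P : Fin D → MvPolynomial (Fin n) ℝ)
    (a : ℝ) (ha : 0 ≤ a) (h : ∀ α : Fin n → ℕ, ∑ i, α i ≤ m - 1 → ∀ j : Fin D,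
      |polyPDval α (P j) x| / dist x y ^ (m - ∑ i, α i) ≤ a) : wS m x y P ≤ a := by
  refine Seminorm.finset_sup_apply_le ha ?_
  rintro ⟨α, j⟩ hα
  rw [Finset.mem_product, mem_midx hm] at hα
  refine le_trans (le_of_eq ?_) (h α hα.1 j)
  simp only [Seminorm.comp_apply, LinearMap.smul_apply, LinearMap.comp_apply,
    LinearMap.proj_apply, coe_normSeminorm, smul_eq_mul, norm_mul, norm_inv, norm_pow,
    Real.norm_eq_abs, pdL_apply, abs_of_nonneg (dist_nonneg (x := x) (y := y))]
  rw [div_eq_inv_mul]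

theorem wS_symm {m n D : ℕ} (hm : 1 ≤ m) (x y : En n) (hxy : x ≠ y)
    (P : Fin D → MvPolynomial (Fin n) ℝ) (hP : ∀ j, (P j).totalDegree ≤ m - 1) :
    wS m y x P ≤ (n + 1) ^ m * wS m x y P := by
  have hd : 0 < dist x y := dist_pos.2 hxy
  have hN : 0 ≤ wS m x y P := apply_nonneg _ _
  refine wS_le hm _ _ _ _ (by positivity) fun α hα j => ?_
  rw [dist_comm, div_le_iff₀ (by positivity)]
  refine base_change hm (P j) (hP j) x y _ hN (fun β hβ => ?_) α hα
  have := le_wS hm x y P β hβ j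
  rwa [div_le_iff₀ (by positivity)] at this

theorem wS_near {m n D : ℕ} (hm : 1 ≤ m) (x y z : En n) (hxy : x ≠ y) (hxz : x ≠ z)
    (h : dist x y ≤ 2 * dist x z) (P : Fin D → MvPolynomial (Fin n) ℝ) :
    wS m x z P ≤ 2 ^ m * wS m x y P := by
  have hd : 0 < dist x y := dist_pos.2 hxy
  have hd' : 0 < dist x z := dist_pos.2 hxz
  have hN : 0 ≤ wS m x y P := apply_nonneg _ _
  refine wS_le hm _ _ _ _ (by positivity) fun α hα j => ?_
  have h1 := le_wS hm x y P α hα j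
  rw [div_le_iff₀ (by positivity)] at h1 ⊢
  refine h1.trans ?_
  have h2 : dist x y ^ (m - ∑ i, α i) ≤ 2 ^ m * dist x z ^ (m - ∑ i, α i) := by
    calc dist x y ^ (m - ∑ i, α i) ≤ (2 * dist x z) ^ (m - ∑ i, α i) := by gcongr
      _ = 2 ^ (m - ∑ i, α i) * dist x z ^ (m - ∑ i, α i) := by rw [mul_pow]
      _ ≤ _ := by
        gcongr
        · norm_num
        · omega
  calc wS m x y P * dist x y ^ (m - ∑ i, α i)
      ≤ wS m x y P * (2 ^ m * dist x z ^ (m - ∑ i, α i)) := by gcongr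
    _ = _ := by ring

theorem wnorm_nonneg {m n D : ℕ} (S : Finset (En n)) (P : En n → Fin D → MvPolynomial (Fin n) ℝ) :
    0 ≤ WNormHomog m S P := by
  apply Real.sSup_nonneg
  rintro r ⟨x, _, y, _, _, α, _, j, rfl⟩
  positivity

theorem wnorm_le {m n D : ℕ} (hm : 1 ≤ m) (S : Finset (En n))
    (P : En n → Fin D → MvPolynomial (Fin n) ℝ) (a : ℝ) (ha : 0 ≤ a)
    (h : ∀ x ∈ S, ∀ y ∈ S, x ≠ y → wS m x y (P x - P y) ≤ a) : WNormHomog m S P ≤ a := by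
  apply Real.sSup_le _ ha
  rintro r ⟨x, hx, y, hy, hxy, α, hα, j, rfl⟩
  exact (le_wS hm x y (P x - P y) α hα j).trans (h x hx y hy hxy)

theorem le_wnorm {m n D : ℕ} (hm : 1 ≤ m) (S : Finset (En n))
    (P : En n → Fin D → MvPolynomial (Fin n) ℝ) (x y : En n) (hx : x ∈ S) (hy : y ∈ S)
    (hxy : x ≠ y) : wS m x y (P x - P y) ≤ WNormHomog m S P := by
  refine wS_le hm _ _ _ _ (wnorm_nonneg S P) fun α hα j => ?_
  refine le_csSup ⟨∑ x ∈ S, ∑ y ∈ S, wS m x y (P x - P y), ?_⟩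
    ⟨x, hx, y, hy, hxy, α, hα, j, rfl⟩
  rintro r ⟨x, hx, y, hy, hxy, α, hα, j, rfl⟩
  refine (le_wS hm x y (P x - P y) α hα j).trans ?_
  refine le_trans ?_ (Finset.single_le_sum
    (f := fun x => ∑ y ∈ S, wS m x y (P x - P y)) (fun x _ =>
      Finset.sum_nonneg fun y _ => apply_nonneg _ _) hx)
  exact Finset.single_le_sum (f := fun y => wS m x y (P x - P y))
    (fun y _ => apply_nonneg _ _) hy

theorem sel_nonneg {m n D : ℕ} (S : Finset (En n))
    (G : En n → Set (Fin D → MvPolynomial (Fin n) ℝ)) : 0 ≤ selNormHomog m S G := by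
  apply Real.sInf_nonneg
  rintro r ⟨P, _, rfl⟩
  exact wnorm_nonneg S P

theorem sel_le {m n D : ℕ} (S : Finset (En n))
    (G : En n → Set (Fin D → MvPolynomial (Fin n) ℝ)) (P) (hP : ∀ x ∈ S, P x ∈ G x) :
    selNormHomog m S G ≤ WNormHomog m S P := by
  refine csInf_le ⟨0, ?_⟩ ⟨P, hP, rfl⟩
  rintro r ⟨P, _, rfl⟩
  exact wnorm_nonneg S P

theorem exists_sel {m n D : ℕ} (S : Finset (En n))
    (G : En n → Set (Fin D → MvPolynomial (Fin n) ℝ)) (hG : ∀ x ∈ S, (G x).Nonempty) (M : ℝ)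
    (h : selNormHomog m S G < M) : ∃ P, (∀ x ∈ S, P x ∈ G x) ∧ WNormHomog m S P < M := by
  have hne : {r : ℝ | ∃ P : En n → Fin D → MvPolynomial (Fin n) ℝ,
      (∀ x ∈ S, P x ∈ G x) ∧ r = WNormHomog m S P}.Nonempty := by
    choose! P hP using hG
    exact ⟨_, P, hP, rfl⟩
  obtain ⟨r, ⟨P, hP, rfl⟩, hr⟩ := exists_lt_of_csInf_lt hne h
  exact ⟨P, hP, hr⟩

end WhitneyPart

section FinalPart

theorem stepLemma (m n D : ℕ) (hm : 1 ≤ m) (hn : 1 ≤ n) (k : ℕ)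
    (hk : 2 ^ (D * Nat.choose (n + m - 1) n) < k) :
    ∃ C : ℝ, 0 < C ∧ ∀ S : Finset (En n), S.card = k →
      ∀ G : En n → Set (Fin D → MvPolynomial (Fin n) ℝ),
        (∀ x ∈ S, (G x).Nonempty ∧ Convex ℝ (G x) ∧
          ∀ P ∈ G x, ∀ j, (P j).totalDegree ≤ m - 1) →
        ∀ M : ℝ, 0 < M → (∀ x0 ∈ S, selNormHomog m (S.erase x0) G < M) →
          selNormHomog m S G ≤ C * M := by
  set Cs : ℝ := (n + 1) ^ m with hCs
  have hCs1 : 1 ≤ Cs := one_le_pow₀ (by linarith [(Nat.cast_nonneg n : (0 : ℝ) ≤ n)])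
  have h2m : (1 : ℝ) ≤ 2 ^ m := one_le_pow₀ (by norm_num)
  have hCs0 : 0 ≤ Cs := by linarith
  have h2m0 : (0 : ℝ) ≤ 2 ^ m := by linarith
  have hCe : 1 ≤ Cs * 2 ^ m := one_le_mul_of_one_le_of_one_le hCs1 h2m
  have hcard : 2 ^ Fintype.card (Fin D × {s // s ∈ monSet n m}) < k := by
    refine lt_of_le_of_lt (Nat.pow_le_pow_right (by norm_num) ?_) hk
    rw [Fintype.card_prod, Fintype.card_fin, Fintype.card_coe]
    exact Nat.mul_le_mul_left _ (card_monSet_le n m hn hm)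
  have hk2 : 1 < k := lt_of_le_of_lt Nat.one_le_two_pow hk
  obtain ⟨C, hC, hkey⟩ := hbKey (Fin D × {s // s ∈ monSet n m}) k hcard
    (Cs * 2 ^ m * Cs) (Cs * 2 ^ m) hCe
  refine ⟨C, hC, fun S hS G hG M hM hsel => ?_⟩
  let σ : Fin k ≃ {x // x ∈ S} := (S.equivFinOfCardEq hS).symm
  let L := coordL n m D
  have hσ : ∀ i j, i ≠ j → (σ i : En n) ≠ σ j := fun i j hij h =>
    hij (σ.injective (Subtype.ext h))
  have hdeg : ∀ c j, (L c j).totalDegree ≤ m - 1 := coordL_degree n m D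
  have hsy : ∀ i j, i ≠ j → ∀ p, wS m (σ j : En n) (σ i) (L p) ≤ Cs * wS m (σ i : En n) (σ j) (L p) :=
    fun i j hij p => wS_symm hm _ _ (hσ i j hij) _ (hdeg p)
  obtain ⟨P, hPG, hP⟩ := hkey (fun i j => (wS m (σ i : En n) (σ j)).comp L)
    (by
      intro i j hij p
      simp only [Seminorm.comp_apply]
      refine (hsy i j hij p).trans ?_
      have h0 : 0 ≤ wS m (σ i : En n) (σ j) (L p) := apply_nonneg _ _
      refine mul_le_mul_of_nonneg_right ?_ h0
      exact le_mul_of_one_le_left hCs0 hCe)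
    (by
      intro i j l hij hil hlj
      simp only [Seminorm.comp_apply]
      have htri := dist_triangle (σ i : En n) (σ l) (σ j)
      by_cases h : dist (σ i : En n) (σ j) ≤ 2 * dist (σ i : En n) (σ l)
      · left
        intro p
        refine (wS_near hm _ _ _ (hσ i j hij) (hσ i l hil) h (L p)).trans ?_
        have h0 : 0 ≤ wS m (σ i : En n) (σ j) (L p) := apply_nonneg _ _
        refine mul_le_mul_of_nonneg_right ?_ h0
        calc (2 : ℝ) ^ m ≤ Cs * 2 ^ m := le_mul_of_one_le_left h2m0 hCs1
          _ ≤ _ := le_mul_of_one_le_right (by positivity) hCs1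
      · right
        intro p
        push Not at h
        have h' : dist (σ j : En n) (σ i) ≤ 2 * dist (σ j : En n) (σ l) := by
          rw [dist_comm (σ j : En n) (σ i), dist_comm (σ j : En n) (σ l)]; linarith
        have e1 := hsy j l hlj.symm p
        have e2 := wS_near hm _ _ _ (hσ j i hij.symm) (hσ j l hlj.symm) h' (L p)
        have e3 := hsy i j hij p
        calc _ ≤ _ := e1
          _ ≤ Cs * (2 ^ m * (Cs * wS m (σ i : En n) (σ j) (L p))) := by
            refine mul_le_mul_of_nonneg_left (e2.trans ?_) hCs0
            exact mul_le_mul_of_nonneg_left e3 h2m0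
          _ = _ := by ring)
    (by
      intro x0
      have hne : (Finset.univ.erase x0 : Finset (Fin k)).Nonempty := by
        rw [← Finset.card_pos, Finset.card_erase_of_mem (Finset.mem_univ _), Finset.card_univ,
          Fintype.card_fin]
        omega
      obtain ⟨x1, h1, hmin⟩ := Finset.exists_min_image _
        (fun z => dist (σ x0 : En n) (σ z)) hne
      have h10 : x1 ≠ x0 := (Finset.mem_erase.1 h1).1
      refine ⟨x1, h10, fun z hz0 hz1 p => ?_⟩
      simp only [Seminorm.comp_apply]
      have hzmin := hmin z (by simp [hz0])
      have htri := dist_triangle (σ z : En n) (σ x0) (σ x1)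
      have h' : dist (σ z : En n) (σ x1) ≤ 2 * dist (σ z : En n) (σ x0) := by
        rw [dist_comm (σ z : En n) (σ x0)] at htri ⊢; linarith
      have e1 := wS_near hm _ _ _ (hσ z x1 hz1) (hσ z x0 hz0) h' (L p)
      have h0 : 0 ≤ wS m (σ z : En n) (σ x1) (L p) := apply_nonneg _ _
      constructor
      · refine e1.trans (mul_le_mul_of_nonneg_right ?_ h0)
        exact le_mul_of_one_le_left h2m0 hCs1
      · calc _ ≤ _ := hsy z x0 hz0 p
          _ ≤ Cs * (2 ^ m * wS m (σ z : En n) (σ x1) (L p)) :=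
            mul_le_mul_of_nonneg_left e1 hCs0
          _ = _ := by ring)
    (fun i => L ⁻¹' G (σ i))
    (by
      intro i
      obtain ⟨⟨Q, hQ⟩, hc, hd⟩ := hG (σ i) (σ i).2
      obtain ⟨c, hc'⟩ := coordL_surj n m D hm Q (hd Q hQ)
      exact ⟨⟨c, by show L c ∈ G (σ i); rw [hc']; exact hQ⟩, hc.linear_preimage L⟩)
    M hM
    (by
      intro x0
      obtain ⟨Q, hQG, hQ⟩ := exists_sel (S.erase (σ x0)) G
        (fun x hx => (hG x (Finset.mem_of_mem_erase hx)).1) M (hsel _ (σ x0).2)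
      have hmem : ∀ i, i ≠ x0 → (σ i : En n) ∈ S.erase (σ x0) := fun i hi =>
        Finset.mem_erase.2 ⟨hσ i x0 hi, (σ i).2⟩
      have : ∀ i, ∃ c, i ≠ x0 → L c = Q (σ i) := by
        intro i
        by_cases hi : i = x0
        · exact ⟨0, fun h => absurd hi h⟩
        · obtain ⟨c, hc⟩ := coordL_surj n m D hm (Q (σ i))
            ((hG (σ i) (σ i).2).2.2 _ (hQG _ (hmem i hi)))
          exact ⟨c, fun _ => hc⟩
      choose c hc using this
      refine ⟨c, fun i hi => ?_, fun i j hi hj hij => ?_⟩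
      · show L (c i) ∈ G (σ i)
        rw [hc i hi]; exact hQG _ (hmem i hi)
      · simp only [Seminorm.comp_apply, map_sub]
        rw [hc i hi, hc j hj]
        exact (le_wnorm hm _ Q _ _ (hmem i hi) (hmem j hj) (hσ i j hij)).trans hQ.le)
  -- assemble the selection
  let R : En n → Fin D → MvPolynomial (Fin n) ℝ := fun x =>
    if hx : x ∈ S then L (P (σ.symm ⟨x, hx⟩)) else 0
  have hR : ∀ i, R (σ i) = L (P i) := by
    intro i
    simp only [R, dif_pos (σ i).2]
    congr 2
    exact σ.symm_apply_apply i
  have hex : ∀ x ∈ S, ∃ i, (σ i : En n) = x := fun x hx =>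
    ⟨σ.symm ⟨x, hx⟩, by rw [Equiv.apply_symm_apply]⟩
  refine (sel_le S G R ?_).trans (wnorm_le hm S R _ (by positivity) ?_)
  · intro x hx
    obtain ⟨i, rfl⟩ := hex x hx
    rw [hR]; exact hPG i
  · intro x hx y hy hxy
    obtain ⟨i, rfl⟩ := hex x hx
    obtain ⟨j, rfl⟩ := hex y hy
    have hij : i ≠ j := fun h => hxy (by rw [h])
    rw [hR, hR]
    have := hP i j hij
    simpa only [Seminorm.comp_apply, map_sub] using this

theorem stepLemma' (m n D : ℕ) (hm : 1 ≤ m) (hn : 1 ≤ n) (k : ℕ)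
    (hk : 2 ^ (D * Nat.choose (n + m - 1) n) < k) :
    ∃ C : ℝ, 0 < C ∧ ∀ S : Finset (En n), S.card = k →
      ∀ G : En n → Set (Fin D → MvPolynomial (Fin n) ℝ),
        (∀ x ∈ S, (G x).Nonempty ∧ Convex ℝ (G x) ∧
          ∀ P ∈ G x, ∀ j, (P j).totalDegree ≤ m - 1) →
        ∃ x0 ∈ S, selNormHomog m S G ≤ C * selNormHomog m (S.erase x0) G := by
  obtain ⟨C, hC, h⟩ := stepLemma m n D hm hn k hk
  refine ⟨C, hC, fun S hS G hG => ?_⟩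
  have hne : S.Nonempty := by
    rw [← Finset.card_pos, hS]; exact lt_of_le_of_lt (Nat.zero_le _) hk
  obtain ⟨x0, hx0, hmax⟩ := Finset.exists_max_image S
    (fun x => selNormHomog m (S.erase x) G) hne
  refine ⟨x0, hx0, ?_⟩
  refine le_of_forall_pos_le_add fun ε hε => ?_
  have hnn : 0 ≤ selNormHomog m (S.erase x0) G := sel_nonneg _ _
  have hpos : 0 < ε / C := by positivity
  have := h S hS G hG (selNormHomog m (S.erase x0) G + ε / C) (by linarith)
    (fun x hx => by have := hmax x hx; linarith)
  refine this.trans (le_of_eq ?_)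
  field_simp

end FinalPart


/-- **Finiteness reduction for the homogeneous selection seminorm**: for `S` of at most
`N` points and diameter `≤ 1`, there is `S' ⊆ S` of at most `2^(dim 𝒫⃗)` points whose
selection seminorm controls that of `S`, with a constant depending only on `m, n, D, N`. -/
theorem selection_norm_finiteness_homogeneous
    (m n D : ℕ) (hm : 1 ≤ m) (hn : 1 ≤ n) (hD : 1 ≤ D) (N : ℕ) (hN : 0 < N) :
    ∃ C : ℝ, 0 < C ∧
      ∀ S : Finset (En n), S.card ≤ N → (∀ x ∈ S, ∀ y ∈ S, dist x y ≤ 1) →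
      ∀ G : En n → Set (Fin D → MvPolynomial (Fin n) ℝ),
        (∀ x ∈ S, (G x).Nonempty ∧ Convex ℝ (G x) ∧
          ∀ P ∈ G x, ∀ j, (P j).totalDegree ≤ m - 1) →
        ∃ S' : Finset (En n), S' ⊆ S ∧ S'.card ≤ 2 ^ (D * Nat.choose (n + m - 1) n) ∧
          selNormHomog m S G ≤ C * selNormHomog m S' G := by
  have key : ∀ k : ℕ, ∃ C : ℝ, 1 ≤ C ∧ ∀ S : Finset (En n), S.card ≤ k →
      ∀ G : En n → Set (Fin D → MvPolynomial (Fin n) ℝ),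
        (∀ x ∈ S, (G x).Nonempty ∧ Convex ℝ (G x) ∧
          ∀ P ∈ G x, ∀ j, (P j).totalDegree ≤ m - 1) →
        ∃ S' : Finset (En n), S' ⊆ S ∧ S'.card ≤ 2 ^ (D * Nat.choose (n + m - 1) n) ∧
          selNormHomog m S G ≤ C * selNormHomog m S' G := by
    intro k
    induction k with
    | zero =>
      refine ⟨1, le_rfl, fun S hS G _ => ⟨S, subset_rfl, hS.trans (Nat.zero_le _), ?_⟩⟩
      rw [one_mul]
    | succ k ih =>
      obtain ⟨C, hC1, hC⟩ := ih
      by_cases hk : k + 1 ≤ 2 ^ (D * Nat.choose (n + m - 1) n)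
      · refine ⟨1, le_rfl, fun S hS G _ => ⟨S, subset_rfl, hS.trans hk, ?_⟩⟩
        rw [one_mul]
      · push Not at hk
        obtain ⟨A, hA, hstep⟩ := stepLemma' m n D hm hn (k + 1) hk
        refine ⟨max A 1 * C, one_le_mul_of_one_le_of_one_le (le_max_right _ _) hC1, ?_⟩
        intro S hS G hG
        rcases Nat.lt_or_ge S.card (k + 1) with hlt | hge
        · obtain ⟨S', h1, h2, h3⟩ := hC S (by omega) G hG
          refine ⟨S', h1, h2, h3.trans ?_⟩
          refine mul_le_mul_of_nonneg_right ?_ (sel_nonneg _ _)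
          exact le_mul_of_one_le_left (by linarith) (le_max_right _ _)
        · obtain ⟨x0, hx0, hx⟩ := hstep S (by omega) G hG
          obtain ⟨S', h1, h2, h3⟩ := hC (S.erase x0)
            (by rw [Finset.card_erase_of_mem hx0]; omega) G
            (fun x hx => hG x (Finset.mem_of_mem_erase hx))
          refine ⟨S', h1.trans (Finset.erase_subset _ _), h2, hx.trans ?_⟩
          rw [mul_assoc]
          refine mul_le_mul (le_max_left _ _) h3 (sel_nonneg _ _) ?_
          exact le_trans zero_le_one (le_max_right _ _)
  obtain ⟨C, hC1, hC⟩ := key N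
  exact ⟨C, by linarith, fun S hS _ G hG => hC S hS G hG⟩
end
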